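/- Shift continuity of piecewise H¹ functions: Let 𝒯_h be a shape-regular triangulation of a bounded polygon Ω with shape regularity constant 𝒦, and let ũ denote the extension of u ∈ H¹_h by zero to ℝ². There is a constant C depending only on Ω and 𝒦 such that for every vector ρ ∈ ℝ², ∫_{ℝ²} (ũ(x + ρ) − ũ(x))² dx ≤ C |ρ| ‖u‖²_{H¹_h}. -/

import Mathlib

open MeasureTheory Set
open scoped Classical

noncomputable section

abbrev Pt : Type := EuclideanSpace ℝ (Fin 2)

structure Tri where
  A : Pt
  B : Pt
  C : Pt

namespace Tri

def cross (t : Tri) : ℝ :=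
  (t.B 0 - t.A 0) * (t.C 1 - t.A 1) - (t.B 1 - t.A 1) * (t.C 0 - t.A 0)

/-- Non-degeneracy (the three vertices are not collinear). -/
def Nondeg (t : Tri) : Prop := t.cross ≠ 0

def area (t : Tri) : ℝ := |t.cross| / 2

def la (t : Tri) : ℝ := dist t.B t.C
def lb (t : Tri) : ℝ := dist t.A t.C
def lc (t : Tri) : ℝ := dist t.A t.B

/-- Inradius of a triangle: `r = 2·Area/(a+b+c)`. -/
def inradius (t : Tri) : ℝ := 2 * t.area / (t.la + t.lb + t.lc)

/-- Circumradius of a triangle: `R = abc/(4·Area)`. -/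
def circumradius (t : Tri) : ℝ := t.la * t.lb * t.lc / (4 * t.area)

/-- Shape regularity constant `R/r` of a triangle. -/
def shapeReg (t : Tri) : ℝ := t.circumradius / t.inradius

def closedHull (t : Tri) : Set Pt := convexHull ℝ {t.A, t.B, t.C}

def openHull (t : Tri) : Set Pt := interior t.closedHull

def edgeList (t : Tri) : List (Pt × Pt) := [(t.A, t.B), (t.B, t.C), (t.C, t.A)]

end Tri

/-- Two (oriented) edges coincide as unoriented segments. -/
def SameEdge (e e' : Pt × Pt) : Prop := e' = e ∨ e' = (e.2, e.1)

/-- Arclength integral of `f` over the straight segment from `p` to `q`. -/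
def segInt (p q : Pt) (f : Pt → ℝ) : ℝ :=
  dist p q * ∫ s in (0:ℝ)..1, f (p + s • (q - p))

/-- A bounded polygonal domain in the plane. -/
def IsPolygon (Ω : Set Pt) : Prop :=
  Ω.Nonempty ∧ Bornology.IsBounded Ω ∧
    ∃ S : Finset Tri, (∀ t ∈ S, t.Nondeg) ∧ Ω = interior (⋃ t ∈ S, t.closedHull)

/-- A (conforming) triangulation of the polygonal domain `Ω`. -/
structure Triangulation (Ω : Set Pt) where
  tris : Finset Tri
  nondeg : ∀ t ∈ tris, t.Nondeg
  cover : Ω = interior (⋃ t ∈ tris, t.closedHull)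
  disj : ∀ t ∈ tris, ∀ t' ∈ tris, t ≠ t' → t.openHull ∩ t'.openHull = ∅
  conforming : ∀ t ∈ tris, ∀ e ∈ t.edgeList,
      segment ℝ e.1 e.2 ⊆ frontier Ω ∨
      ∃ t' ∈ tris, t' ≠ t ∧ ∃ e' ∈ t'.edgeList, SameEdge e e'

namespace Triangulation

variable {Ω : Set Pt}

/-- All triangles have shape regularity constant at most `K`. -/
def ShapeRegular (T : Triangulation Ω) (K : ℝ) : Prop :=
  ∀ t ∈ T.tris, t.shapeReg ≤ K

/-- `‖u‖²_{L²(Ω)}` of a piecewise function. -/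
def sqL2 (T : Triangulation Ω) (u : Tri → Pt → ℝ) : ℝ :=
  ∑ t ∈ T.tris, ∫ x in t.openHull, (u t x) ^ 2

/-- `∫_{Ω_h} |∇u|²` of a piecewise function. -/
def gradSq (T : Triangulation Ω) (u : Tri → Pt → ℝ) : ℝ :=
  ∑ t ∈ T.tris, ∫ x in t.openHull, ‖fderiv ℝ (u t) x‖ ^ 2

/-- Contribution `Σ_{e shared by t₁,t₂} |e|⁻¹ ∫_e [u]²` of the common edges of `t₁, t₂`. -/
def edgeJump (u : Tri → Pt → ℝ) (t₁ t₂ : Tri) : ℝ :=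
  ((t₁.edgeList.map fun e =>
    if ∃ e' ∈ t₂.edgeList, SameEdge e e' then
      (dist e.1 e.2)⁻¹ * segInt e.1 e.2 (fun x => (u t₁ x - u t₂ x) ^ 2)
    else 0)).sum

/-- `Σ_{e ∈ ℰ⁰_h} |e|⁻¹ ∫_e [u]²` (each interior edge counted once, whence the `1/2`). -/
def jumpSq (T : Triangulation Ω) (u : Tri → Pt → ℝ) : ℝ :=
  (1/2) * ∑ t₁ ∈ T.tris, ∑ t₂ ∈ T.tris, if t₁ ≠ t₂ then edgeJump u t₁ t₂ else 0

/-- The squared `H¹_h` norm. -/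
def normSq (T : Triangulation Ω) (u : Tri → Pt → ℝ) : ℝ :=
  T.sqL2 u + T.gradSq u + T.jumpSq u

/-- `∫_{∂Ω} u²` via the traces from the triangles having a boundary edge. -/
def bdrySq (T : Triangulation Ω) (u : Tri → Pt → ℝ) : ℝ :=
  ∑ t ∈ T.tris, ((t.edgeList.map fun e =>
    if segment ℝ e.1 e.2 ⊆ frontier Ω then segInt e.1 e.2 (fun x => (u t x) ^ 2) else 0)).sum

/-- `u` is a piecewise `H¹` function subordinate to the triangulation. -/
def PwH1 (T : Triangulation Ω) (u : Tri → Pt → ℝ) : Prop :=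
  ∀ t ∈ T.tris, ContinuousOn (u t) t.closedHull ∧ DifferentiableOn ℝ (u t) t.openHull ∧
    IntegrableOn (fun x => (u t x) ^ 2) t.openHull ∧
    IntegrableOn (fun x => ‖fderiv ℝ (u t) x‖ ^ 2) t.openHull

/-- `v : ℝ² → ℝ` is the extension by zero of the piecewise function `u`. -/
def Glues (T : Triangulation Ω) (u : Tri → Pt → ℝ) (v : Pt → ℝ) : Prop :=
  (∀ t ∈ T.tris, ∀ x ∈ t.openHull, v x = u t x) ∧ ∀ x, x ∉ Ω → v x = 0

end Triangulation

/-!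
Put `w = v|v|`. Since `(a - c)² ≤ 2 |a|a| - c|c||`, the `L²` shift estimate for `v` follows from an
`L¹` shift estimate for `w`, and the latter holds because `w` has bounded variation in `Ω`. Indeed
`|∇w| = 2 |v| |∇v|` in each triangle, and the integral of `|[w]|` over an edge `e` is at most
`|e|⁻¹ ∫_e [v]²` plus `|e|` times the integrals over `e` of the squares of the two traces; a trace
inequality bounds these, as `|e|²` is at most a multiple, depending on `𝒦`, of the area of either
triangle at `e`. Hence the variation of `w` in `Ω` is at most `C ‖u‖²_{H¹_h}`.

At `∂Ω`, where `v` jumps without contributing to the norm, write `Ω` up to a null set as a finite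
union of fixed triangles that do not depend on the mesh. A point that leaves one of them under the
shift by `ρ` lies in a strip of width `O(|ρ|)` along a side, and the mass of `w` in the strip is
compared by translation with its mass in parallel strips inside the triangle; averaging over these
bounds it by `C |ρ|` times the `L¹` norm plus the variation of `w`.
-/

section BoundedVariation

open Filter Topology Metric
open scoped NNReal ENNReal Convolution

variable {E : Type*} [NormedAddCommGroup E] [NormedSpace ℝ E] [MeasurableSpace E]

/-- The measure `ν` dominates on `U` the distributional derivative of `w` in the direction `ω`. -/
def DominatesDeriv (μ : Measure E) (w : E → ℝ) (U : Set E) (ω : E) (ν : Measure E) : Prop :=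
  ∀ φ : E → ℝ, ContDiff ℝ 1 φ → HasCompactSupport φ → tsupport φ ⊆ U →
    ‖∫ x, fderiv ℝ φ x ω * w x ∂μ‖ₑ ≤ ∫⁻ x, ‖φ x‖ₑ ∂ν

/-- The distributional gradient of `w` has total variation at most `V` on `U`; instead of one
vector measure there is one dominating measure for each direction. -/
def HasVariationBound (μ : Measure E) (w : E → ℝ) (U : Set E) (V : ℝ≥0) : Prop :=
  ∀ ω : E, ∃ ν : Measure E, DominatesDeriv μ w U ω ν ∧ ν univ ≤ ‖ω‖ₑ * V

theorem HasVariationBound.mono {μ : Measure E} {w : E → ℝ} {U U' : Set E} {V V' : ℝ≥0}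
    (h : HasVariationBound μ w U V) (hU : U' ⊆ U) (hV : V ≤ V') : HasVariationBound μ w U' V' :=
  fun ω ↦ (h ω).imp fun _ hν ↦
    ⟨fun φ h₁ h₂ h₃ ↦ hν.1 φ h₁ h₂ (h₃.trans hU), hν.2.trans (by gcongr)⟩

variable [FiniteDimensional ℝ E] [BorelSpace E] {μ : Measure E} [μ.IsAddHaarMeasure]
  {w η : E → ℝ} {U P : Set E} {ω x : E} {ν : Measure E}

theorem enorm_fderiv_convolution_le (hw : LocallyIntegrable w μ) (hη : ContDiff ℝ 1 η)
    (hηc : HasCompactSupport η) (hν : DominatesDeriv μ w U ω ν)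
    (hU : tsupport (fun y ↦ η (x - y)) ⊆ U) :
    ‖fderiv ℝ (η ⋆[ContinuousLinearMap.lsmul ℝ ℝ, μ] w) x ω‖ₑ ≤ ∫⁻ y, ‖η (x - y)‖ₑ ∂ν := by
  have hconv := hηc.hasFDerivAt_convolution_left (ContinuousLinearMap.lsmul ℝ ℝ) hη hw x
  have hexists : ConvolutionExistsAt (fderiv ℝ η) w x
      ((ContinuousLinearMap.lsmul ℝ ℝ).precompL E) μ :=
    (hηc.fderiv ℝ).convolutionExists_left _ (hη.continuous_fderiv one_ne_zero) hw x
  have hder : fderiv ℝ (η ⋆[ContinuousLinearMap.lsmul ℝ ℝ, μ] w) x ω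
      = -∫ y, fderiv ℝ (fun y ↦ η (x - y)) y ω * w y ∂μ := by
    rw [hconv.fderiv, convolution_eq_swap, ← integral_neg,
      ContinuousLinearMap.integral_apply hexists.integrable_swap]
    refine integral_congr_ae (.of_forall fun y ↦ ?_)
    have hcomp : fderiv ℝ (fun y ↦ η (x - y)) y = -fderiv ℝ η (x - y) := by
      simpa [Function.comp_def] using (((hη.differentiable one_ne_zero) (x - y)).hasFDerivAt.comp y
        ((hasFDerivAt_id y).const_sub x)).fderiv
    simp [hcomp, ContinuousLinearMap.precompL_apply]
  rw [hder, enorm_neg]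
  refine hν _ (hη.comp (contDiff_const.sub contDiff_id)) ?_ hU
  exact hηc.comp_homeomorph (Homeomorph.subLeft x)

theorem enorm_convolution_shift_sub_le (hw : LocallyIntegrable w μ) (hη : ContDiff ℝ 1 η)
    (hηc : HasCompactSupport η) (hν : DominatesDeriv μ w U ω ν)
    (hU : ∀ s ∈ Icc (0 : ℝ) 1, tsupport (fun y ↦ η (x + s • ω - y)) ⊆ U) :
    ‖(η ⋆[ContinuousLinearMap.lsmul ℝ ℝ, μ] w) (x + ω) -
        (η ⋆[ContinuousLinearMap.lsmul ℝ ℝ, μ] w) x‖ₑ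
      ≤ ∫⁻ s in Icc (0 : ℝ) 1, ∫⁻ y, ‖η (x + s • ω - y)‖ₑ ∂ν := by
  set W := η ⋆[ContinuousLinearMap.lsmul ℝ ℝ, μ] w
  have hW : ContDiff ℝ 1 W := hηc.contDiff_convolution_left _ hη hw
  have hline : ∀ s : ℝ, HasDerivAt (fun s : ℝ ↦ W (x + s • ω)) (fderiv ℝ W (x + s • ω) ω) s :=
    fun s ↦ by
      have hseg : HasDerivAt (fun s : ℝ ↦ x + s • ω) ω s := by
        simpa using ((hasDerivAt_id s).smul_const ω).const_add x
      exact ((hW.differentiable one_ne_zero) _).hasFDerivAt.comp_hasDerivAt s hseg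
  have hsmooth : ContDiff ℝ 1 fun s : ℝ ↦ W (x + s • ω) := by fun_prop
  calc ‖W (x + ω) - W x‖ₑ = ‖W (x + (1 : ℝ) • ω) - W (x + (0 : ℝ) • ω)‖ₑ := by simp
    _ ≤ ∫⁻ s in Icc (0 : ℝ) 1, ‖deriv (fun s : ℝ ↦ W (x + s • ω)) s‖ₑ :=
      enorm_sub_le_lintegral_deriv_of_contDiffOn_Icc hsmooth.contDiffOn zero_le_one
    _ ≤ _ := by
      refine setLIntegral_mono' measurableSet_Icc fun s hs ↦ ?_
      rw [(hline s).deriv]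
      exact enorm_fderiv_convolution_le hw hη hηc hν (hU s hs)

theorem lintegral_setLIntegral_shift_le_of_occupation {g : E → ℝ≥0∞} {τ : ℝ≥0∞}
    (hg : Measurable g) (hP : MeasurableSet P)
    (hτ : ∀ y, volume {s : ℝ | s ∈ Icc (0 : ℝ) 1 ∧ y - s • ω ∈ P} ≤ τ) (y : E) :
    ∫⁻ s in Icc (0 : ℝ) 1, ∫⁻ x in P, g (x + s • ω - y) ∂μ ≤ τ * ∫⁻ z, g z ∂μ := by
  have hPm : Measurable fun p : ℝ × E ↦ P.indicator (1 : E → ℝ≥0∞) (p.2 + y - p.1 • ω) :=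
    (measurable_one.indicator hP).comp (by fun_prop)
  have htrans : ∀ s : ℝ, ∫⁻ x in P, g (x + s • ω - y) ∂μ
      = ∫⁻ z, g z * P.indicator 1 (z + y - s • ω) ∂μ := by
    intro s
    rw [← lintegral_indicator hP, ← lintegral_add_right_eq_self (μ := μ) _ (y - s • ω)]
    refine lintegral_congr fun z ↦ ?_
    rw [← add_sub_assoc]
    by_cases hz : z + y - s • ω ∈ P <;> simp [hz]
  have htime : ∀ z, ∫⁻ s in Icc (0 : ℝ) 1, P.indicator (1 : E → ℝ≥0∞) (z - s • ω) ≤ τ := by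
    intro z
    have hset : MeasurableSet {s : ℝ | z - s • ω ∈ P} :=
      hP.preimage (by fun_prop : Measurable fun s : ℝ ↦ z - s • ω)
    calc ∫⁻ s in Icc (0 : ℝ) 1, P.indicator (1 : E → ℝ≥0∞) (z - s • ω)
        = volume.restrict (Icc (0 : ℝ) 1) {s : ℝ | z - s • ω ∈ P} :=
          lintegral_indicator_one hset
      _ ≤ τ := by rw [Measure.restrict_apply hset, inter_comm]; exact hτ z
  simp_rw [htrans]
  rw [lintegral_lintegral_swap ((hg.comp measurable_snd).mul hPm).aemeasurable, mul_comm,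
    ← lintegral_mul_const _ hg]
  refine lintegral_mono fun z ↦ ?_
  have hPmz : Measurable fun s : ℝ ↦ P.indicator (1 : E → ℝ≥0∞) (z + y - s • ω) :=
    hPm.comp measurable_prodMk_right
  rw [lintegral_const_mul _ hPmz]
  gcongr
  exact htime (z + y)

theorem setLIntegral_lintegral_shift_le_of_occupation [SFinite ν] {g : E → ℝ≥0∞} {τ : ℝ≥0∞}
    (hg : Measurable g) (hP : MeasurableSet P)
    (hτ : ∀ y, volume {s : ℝ | s ∈ Icc (0 : ℝ) 1 ∧ y - s • ω ∈ P} ≤ τ) :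
    ∫⁻ x in P, ∫⁻ s in Icc (0 : ℝ) 1, ∫⁻ y, g (x + s • ω - y) ∂ν ∂volume ∂μ
      ≤ τ * (∫⁻ z, g z ∂μ) * ν univ := by
  calc ∫⁻ x in P, ∫⁻ s in Icc (0 : ℝ) 1, ∫⁻ y, g (x + s • ω - y) ∂ν ∂volume ∂μ
      = ∫⁻ s in Icc (0 : ℝ) 1, ∫⁻ x in P, ∫⁻ y, g (x + s • ω - y) ∂ν ∂μ :=
        lintegral_lintegral_swap (Measurable.lintegral_prod_right'
          (f := fun p : (E × ℝ) × E ↦ g (p.1.1 + p.1.2 • ω - p.2)) (by fun_prop)).aemeasurable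
    _ = ∫⁻ s in Icc (0 : ℝ) 1, ∫⁻ y, ∫⁻ x in P, g (x + s • ω - y) ∂μ ∂ν :=
        lintegral_congr fun s ↦ lintegral_lintegral_swap (by fun_prop)
    _ = ∫⁻ y, ∫⁻ s in Icc (0 : ℝ) 1, ∫⁻ x in P, g (x + s • ω - y) ∂μ ∂volume ∂ν :=
        lintegral_lintegral_swap (Measurable.lintegral_prod_right'
          (f := fun p : (ℝ × E) × E ↦ g (p.2 + p.1.1 • ω - p.1.2)) (by fun_prop)).aemeasurable
    _ ≤ ∫⁻ _, τ * ∫⁻ z, g z ∂μ ∂ν :=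
        lintegral_mono (lintegral_setLIntegral_shift_le_of_occupation hg hP hτ)
    _ = τ * (∫⁻ z, g z ∂μ) * ν univ := lintegral_const _

theorem tsupport_normed_comp_sub_left (b : ContDiffBump (0 : E)) (x : E) :
    tsupport (fun y ↦ b.normed μ (x - y)) = closedBall x b.rOut := by
  rw [show (fun y ↦ b.normed μ (x - y)) = b.normed μ ∘ Homeomorph.subLeft x from rfl,
    tsupport_comp_eq_preimage, b.tsupport_normed_eq]
  ext y
  simp [dist_eq_norm, norm_sub_rev]

theorem ae_enorm_shift_sub_le_liminf {b : ℕ → ContDiffBump (0 : E)}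
    (hr : Tendsto (fun n ↦ (b n).rOut) atTop (𝓝 0)) (hK : ∀ n, (b n).rOut ≤ 2 * (b n).rIn)
    (hν : DominatesDeriv μ w U ω ν) (hw : LocallyIntegrable w μ) (hU : IsOpen U) :
    ∀ᵐ x ∂μ, (∀ s ∈ Icc (0 : ℝ) 1, x + s • ω ∈ U) → ‖w (x + ω) - w x‖ₑ ≤
      liminf (fun n ↦ ∫⁻ s in Icc (0 : ℝ) 1, ∫⁻ y, ‖(b n).normed μ (x + s • ω - y)‖ₑ ∂ν)
        atTop := by
  have hae := ContDiffBump.ae_convolution_tendsto_right_of_locallyIntegrable (μ := μ) hr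
    (.of_forall hK) hw
  filter_upwards [hae, (measurePreserving_add_right μ ω).quasiMeasurePreserving.ae hae]
    with x hx hxω hxU
  obtain ⟨δ, hδ, hδU⟩ :=
    (isCompact_Icc.image (by fun_prop : Continuous fun s : ℝ ↦ x + s • ω)
      ).exists_cthickening_subset_open hU (image_subset_iff.2 hxU)
  have hnear : ∀ᶠ n in atTop, ∀ s ∈ Icc (0 : ℝ) 1,
      tsupport (fun y ↦ (b n).normed μ (x + s • ω - y)) ⊆ U := by
    filter_upwards [hr.eventually_le_const hδ] with n hn s hs
    rw [tsupport_normed_comp_sub_left]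
    exact ((closedBall_subset_closedBall hn).trans
      (closedBall_subset_cthickening (mem_image_of_mem _ hs) δ)).trans hδU
  exact (hxω.sub hx).enorm.liminf_eq.symm.trans_le (liminf_le_liminf (hnear.mono fun n hn ↦
    enorm_convolution_shift_sub_le hw (b n).contDiff_normed (b n).hasCompactSupport_normed hν hn))

theorem DominatesDeriv.setLIntegral_shift_sub_le [SFinite ν] {τ : ℝ≥0∞}
    (hν : DominatesDeriv μ w U ω ν) (hw : LocallyIntegrable w μ) (hU : IsOpen U)
    (hP : MeasurableSet P) (hPU : ∀ x ∈ P, ∀ s ∈ Icc (0 : ℝ) 1, x + s • ω ∈ U)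
    (hτ : ∀ y, volume {s : ℝ | s ∈ Icc (0 : ℝ) 1 ∧ y - s • ω ∈ P} ≤ τ) :
    ∫⁻ x in P, ‖w (x + ω) - w x‖ₑ ∂μ ≤ τ * ν univ := by
  let b : ℕ → ContDiffBump (0 : E) := fun n ↦
    ⟨(1 / 2) ^ (n + 1), 2 * (1 / 2) ^ (n + 1), by positivity,
      lt_mul_of_one_lt_left (by positivity) one_lt_two⟩
  have hr : Tendsto (fun n ↦ (b n).rOut) atTop (𝓝 0) := by
    have := (tendsto_pow_atTop_nhds_zero_of_lt_one (r := (1 / 2 : ℝ)) (by norm_num)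
      (by norm_num)).comp (tendsto_add_atTop_nat 1)
    simpa [b] using this.const_mul 2
  have hmass : ∀ n, ∫⁻ z, ‖(b n).normed μ z‖ₑ ∂μ = 1 := fun n ↦ by
    rw [← ofReal_integral_norm_eq_lintegral_enorm (b n).integrable_normed]
    simp [Real.norm_of_nonneg ((b n).nonneg_normed _), (b n).integral_normed]
  have hmeas : ∀ n, Measurable fun z ↦ ‖(b n).normed μ z‖ₑ := fun n ↦
    (b n).continuous_normed.enorm.measurable
  let G : ℕ → E → ℝ≥0∞ := fun n x ↦
    ∫⁻ s in Icc (0 : ℝ) 1, ∫⁻ y, ‖(b n).normed μ (x + s • ω - y)‖ₑ ∂ν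
  have hG : ∀ n, Measurable (G n) := fun n ↦ by
    have : Measurable fun p : (E × ℝ) × E ↦ ‖(b n).normed μ (p.1.1 + p.1.2 • ω - p.2)‖ₑ :=
      (hmeas n).comp (by fun_prop)
    exact (this.lintegral_prod_right' (ν := ν)).lintegral_prod_right'
  calc ∫⁻ x in P, ‖w (x + ω) - w x‖ₑ ∂μ ≤ ∫⁻ x in P, liminf (fun n ↦ G n x) atTop ∂μ :=
        lintegral_mono_ae ((ae_restrict_iff' hP).2
          ((ae_enorm_shift_sub_le_liminf hr (fun _ ↦ le_rfl) hν hw hU).mono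
            fun x hx hxP ↦ hx (hPU x hxP)))
    _ ≤ liminf (fun n ↦ ∫⁻ x in P, G n x ∂μ) atTop := lintegral_liminf_le hG
    _ ≤ liminf (fun _ : ℕ ↦ τ * ν univ) atTop :=
        liminf_le_liminf (.of_forall fun n ↦ by
          simpa [hmass] using setLIntegral_lintegral_shift_le_of_occupation (μ := μ) (ν := ν)
            (hmeas n) hP hτ)
    _ = τ * ν univ := liminf_const _

theorem HasVariationBound.setLIntegral_shift_sub_le {V : ℝ≥0} {τ : ℝ≥0∞}
    (hwU : HasVariationBound μ w U V) (hw : LocallyIntegrable w μ) (hU : IsOpen U)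
    (hP : MeasurableSet P) (hPU : ∀ x ∈ P, ∀ s ∈ Icc (0 : ℝ) 1, x + s • ω ∈ U)
    (hτ : ∀ y, volume {s : ℝ | s ∈ Icc (0 : ℝ) 1 ∧ y - s • ω ∈ P} ≤ τ) :
    ∫⁻ x in P, ‖w (x + ω) - w x‖ₑ ∂μ ≤ τ * (‖ω‖ₑ * V) := by
  obtain ⟨ν, hν, hmass⟩ := hwU ω
  have : IsFiniteMeasure ν := ⟨hmass.trans_lt (ENNReal.mul_lt_top enorm_lt_top ENNReal.coe_lt_top)⟩
  exact (hν.setLIntegral_shift_sub_le hw hU hP hPU hτ).trans (by gcongr)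

end BoundedVariation

section ShiftCovering

open scoped ENNReal

theorem enorm_shift_sub_le_sum {E κ : Type*} [AddGroup E] [Fintype κ] {U : κ → Set E} {w : E → ℝ}
    {x ρ : E} (hx : (∀ k, x ∉ U k) → w x = 0) (hxρ : (∀ k, x + ρ ∉ U k) → w (x + ρ) = 0) :
    ‖w (x + ρ) - w x‖ₑ ≤ ∑ k,
      ({x ∈ U k | x + ρ ∈ U k}.indicator (fun x ↦ ‖w (x + ρ) - w x‖ₑ) x
        + ({x ∈ U k | x + ρ ∉ U k}.indicator (fun x ↦ ‖w x‖ₑ) x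
          + {x ∈ U k | x + -ρ ∉ U k}.indicator (fun x ↦ ‖w x‖ₑ) (x + ρ))) := by
  by_cases hboth : ∃ k, x ∈ U k ∧ x + ρ ∈ U k
  · obtain ⟨k, hk⟩ := hboth
    refine le_trans ?_ (Finset.single_le_sum (fun _ _ ↦ zero_le) (Finset.mem_univ k))
    simp [hk]
  · simp only [not_exists, not_and] at hboth
    have hleave : ‖w x‖ₑ ≤ ∑ k, {x ∈ U k | x + ρ ∉ U k}.indicator (fun x ↦ ‖w x‖ₑ) x := by
      by_cases hin : ∃ k, x ∈ U k
      · obtain ⟨k, hk⟩ := hin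
        refine le_trans ?_ (Finset.single_le_sum (fun _ _ ↦ zero_le) (Finset.mem_univ k))
        simp [hk, hboth k hk]
      · simp [hx (not_exists.1 hin)]
    have henter : ‖w (x + ρ)‖ₑ
        ≤ ∑ k, {x ∈ U k | x + -ρ ∉ U k}.indicator (fun x ↦ ‖w x‖ₑ) (x + ρ) := by
      by_cases hin : ∃ k, x + ρ ∈ U k
      · obtain ⟨k, hk⟩ := hin
        refine le_trans ?_ (Finset.single_le_sum (fun _ _ ↦ zero_le) (Finset.mem_univ k))
        have hxk : x ∉ U k := fun hxk ↦ hboth k hxk hk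
        simp [hk, hxk]
      · simp [hxρ (not_exists.1 hin)]
    calc ‖w (x + ρ) - w x‖ₑ ≤ ‖w x‖ₑ + ‖w (x + ρ)‖ₑ := enorm_sub_le.trans_eq (add_comm _ _)
      _ ≤ _ := by
        rw [Finset.sum_add_distrib, Finset.sum_add_distrib]
        exact (add_le_add hleave henter).trans le_add_self

theorem lintegral_shift_sub_le_sum {E κ : Type*} [AddGroup E] [MeasurableSpace E] [MeasurableAdd E]
    [Fintype κ] {μ : Measure E} [μ.IsAddRightInvariant] {U : κ → Set E} {w : E → ℝ}
    (hU : ∀ k, MeasurableSet (U k)) (hw : Measurable w)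
    (hzero : ∀ᵐ x ∂μ, (∀ k, x ∉ U k) → w x = 0) (ρ : E) :
    ∫⁻ x, ‖w (x + ρ) - w x‖ₑ ∂μ ≤ ∑ k, ((∫⁻ x in {x ∈ U k | x + ρ ∈ U k}, ‖w (x + ρ) - w x‖ₑ ∂μ)
      + ((∫⁻ x in {x ∈ U k | x + ρ ∉ U k}, ‖w x‖ₑ ∂μ)
        + ∫⁻ x in {x ∈ U k | x + -ρ ∉ U k}, ‖w x‖ₑ ∂μ)) := by
  let stay : κ → E → ℝ≥0∞ := fun k ↦
    {x ∈ U k | x + ρ ∈ U k}.indicator fun x ↦ ‖w (x + ρ) - w x‖ₑ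
  let exit : E → κ → E → ℝ≥0∞ := fun ρ k ↦ {x ∈ U k | x + ρ ∉ U k}.indicator fun x ↦ ‖w x‖ₑ
  have hpre : ∀ k (ρ : E), MeasurableSet {x | x + ρ ∈ U k} := fun k ρ ↦
    (hU k).preimage (measurable_add_const ρ)
  have hset : ∀ k, MeasurableSet {x ∈ U k | x + ρ ∈ U k} := fun k ↦ (hU k).inter (hpre k ρ)
  have hset' : ∀ (ρ : E) k, MeasurableSet {x ∈ U k | x + ρ ∉ U k} := fun ρ k ↦
    (hU k).inter (hpre k ρ).compl
  have hstay : ∀ k, Measurable (stay k) := fun k ↦ Measurable.indicator (by fun_prop) (hset k)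
  have hexit : ∀ ρ k, Measurable (exit ρ k) := fun ρ k ↦
    Measurable.indicator (by fun_prop) (hset' ρ k)
  calc ∫⁻ x, ‖w (x + ρ) - w x‖ₑ ∂μ
      ≤ ∫⁻ x, ∑ k, (stay k x + (exit ρ k x + exit (-ρ) k (x + ρ))) ∂μ := by
        refine lintegral_mono_ae ?_
        filter_upwards [hzero,
          (measurePreserving_add_right μ ρ).quasiMeasurePreserving.ae hzero] with x hx hxρ
        exact enorm_shift_sub_le_sum hx hxρ
    _ = ∑ k, ((∫⁻ x, stay k x ∂μ) + ((∫⁻ x, exit ρ k x ∂μ) + ∫⁻ x, exit (-ρ) k x ∂μ)) := by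
        rw [lintegral_finsetSum _ fun k _ ↦ by fun_prop]
        refine Finset.sum_congr rfl fun k _ ↦ ?_
        rw [lintegral_add_left (hstay k), lintegral_add_left (hexit ρ k),
          lintegral_add_right_eq_self (exit (-ρ) k) ρ]
    _ = _ := by simp only [stay, exit, lintegral_indicator, hset, hset']

end ShiftCovering

section Barycentric

variable {E ι : Type*} [NormedAddCommGroup E] [NormedSpace ℝ E]

theorem linear_coord_sub (b : AffineBasis ι ℝ E) (i j k : ι) :
    (b.coord k).linear (b i - b j) = (if k = i then 1 else 0) - if k = j then 1 else 0 := by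
  rw [← vsub_eq_sub, AffineMap.linearMap_vsub, vsub_eq_sub, b.coord_apply, b.coord_apply]

theorem coord_add_smul_sub (b : AffineBasis ι ℝ E) (i j k : ι) (x : E) (r : ℝ) :
    b.coord k (x + r • (b i - b j))
      = b.coord k x + r * ((if k = i then 1 else 0) - if k = j then 1 else 0) := by
  rw [add_comm x, ← vadd_eq_add, AffineMap.map_vadd, map_smul, linear_coord_sub]
  simp [add_comm]

theorem linear_coord_apply (b : AffineBasis ι ℝ E) (i : ι) (ω : E) :
    (b.coord i).linear ω = b.coord i ω - b.coord i 0 := by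
  simpa using (b.coord i).linearMap_vsub ω 0

theorem sum_linear_coord [Fintype ι] (b : AffineBasis ι ℝ E) (ω : E) :
    ∑ i, (b.coord i).linear ω = 0 := by
  simp only [linear_coord_apply, Finset.sum_sub_distrib, b.sum_coord_apply_eq_one, sub_self]

theorem sum_linear_coord_smul [Fintype ι] (b : AffineBasis ι ℝ E) (ω : E) :
    ∑ i, (b.coord i).linear ω • b i = ω := by
  simp only [linear_coord_apply, sub_smul, Finset.sum_sub_distrib,
    b.linear_combination_coord_eq_self, sub_zero]

theorem fderiv_coord [FiniteDimensional ℝ E] (b : AffineBasis ι ℝ E) (i : ι) (x ω : E) :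
    fderiv ℝ (b.coord i) x ω = (b.coord i).linear ω := by
  let a : E →ᴬ[ℝ] ℝ := ⟨b.coord i, continuous_barycentric_coord b i⟩
  exact congrArg (· ω) a.fderiv

theorem contDiff_coord [FiniteDimensional ℝ E] (b : AffineBasis ι ℝ E) (i : ι) :
    ContDiff ℝ 1 (b.coord i) :=
  (⟨b.coord i, continuous_barycentric_coord b i⟩ : E →ᴬ[ℝ] ℝ).contDiff

end Barycentric

section Simplex

open scoped NNReal

variable {E ι : Type*} [NormedAddCommGroup E] [NormedSpace ℝ E]

/-- The open simplex spanned by an affine basis. -/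
def openSimplex (b : AffineBasis ι ℝ E) : Set E := interior (convexHull ℝ (range b))

theorem isOpen_openSimplex (b : AffineBasis ι ℝ E) : IsOpen (openSimplex b) := isOpen_interior

theorem convex_openSimplex (b : AffineBasis ι ℝ E) : Convex ℝ (openSimplex b) :=
  (convex_convexHull ℝ _).interior

theorem mem_openSimplex [Finite ι] {b : AffineBasis ι ℝ E} {x : E} :
    x ∈ openSimplex b ↔ ∀ i, 0 < b.coord i x := by
  rw [openSimplex, b.interior_convexHull, mem_ofPred_eq]

section Strip

variable [Fintype ι]

/-- The points of the open simplex whose `i`-th barycentric coordinate is at most `c` and whose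
`j`-th one is at least the average value `1 / card ι`; for fixed `c` these sets cover the strip of
width proportional to `c` along the boundary of the simplex. -/
def simplexStrip (b : AffineBasis ι ℝ E) (c : ℝ) (i j : ι) : Set E :=
  {x ∈ openSimplex b | b.coord i x ≤ c ∧ (Fintype.card ι : ℝ)⁻¹ ≤ b.coord j x}

theorem exists_simplexStrip_mem {b : AffineBasis ι ℝ E} {x : E} {c : ℝ} {i : ι}
    (hx : x ∈ openSimplex b) (hi : b.coord i x ≤ c) : ∃ j, x ∈ simplexStrip b c i j := by
  have : Nonempty ι := b.nonempty
  obtain ⟨j, -, hj⟩ := Finset.exists_le_of_sum_le (s := Finset.univ)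
    (f := fun _ ↦ (Fintype.card ι : ℝ)⁻¹) (g := fun j ↦ b.coord j x) Finset.univ_nonempty
    (by simp [b.sum_coord_apply_eq_one])
  exact ⟨j, hx, hi, hj⟩

theorem exists_exit_subset_iUnion_simplexStrip [FiniteDimensional ℝ E] (b : AffineBasis ι ℝ E) :
    ∃ L : ℝ≥0, ∀ ρ : E, {x ∈ openSimplex b | x + ρ ∉ openSimplex b}
      ⊆ ⋃ i, ⋃ j, simplexStrip b (L * ‖ρ‖) i j := by
  let f : ι → E →L[ℝ] ℝ := fun i ↦ LinearMap.toContinuousLinearMap (b.coord i).linear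
  refine ⟨∑ i, ‖f i‖₊, fun ρ x hx ↦ ?_⟩
  obtain ⟨i, hi⟩ := not_forall.1 (mt mem_openSimplex.2 hx.2)
  have hadd : b.coord i (x + ρ) = f i ρ + b.coord i x := by
    rw [add_comm, ← vadd_eq_add, AffineMap.map_vadd, vadd_eq_add]
    rfl
  have hle : |f i ρ| ≤ (∑ i, ‖f i‖₊ : ℝ≥0) * ‖ρ‖ := (f i).le_opNorm ρ |>.trans (by
    gcongr
    exact_mod_cast Finset.single_le_sum (f := fun i ↦ ‖f i‖₊) (fun _ _ ↦ zero_le)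
      (Finset.mem_univ i))
  have hcoord : b.coord i x ≤ (∑ i, ‖f i‖₊ : ℝ≥0) * ‖ρ‖ := by linarith [neg_abs_le (f i ρ)]
  obtain ⟨j, hj⟩ := exists_simplexStrip_mem hx.1 hcoord
  exact mem_iUnion₂.2 ⟨i, j, hj⟩

theorem measurableSet_simplexStrip [FiniteDimensional ℝ E] [MeasurableSpace E] [BorelSpace E]
    (b : AffineBasis ι ℝ E) (c : ℝ) (i j : ι) : MeasurableSet (simplexStrip b c i j) :=
  (isOpen_openSimplex b).measurableSet.inter
    ((measurableSet_le (continuous_barycentric_coord b i).measurable measurable_const).inter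
      (measurableSet_le measurable_const (continuous_barycentric_coord b j).measurable))

theorem add_smul_mem_openSimplex_of_mem_simplexStrip
    {b : AffineBasis ι ℝ E} {c : ℝ} {i j : ι} (hij : i ≠ j) {x : E}
    (hx : x ∈ simplexStrip b c i j) {r : ℝ} (hr : 0 ≤ r) (hr' : r < (Fintype.card ι : ℝ)⁻¹) :
    x + r • (b i - b j) ∈ openSimplex b := by
  refine mem_openSimplex.2 fun k ↦ ?_
  have hk := mem_openSimplex.1 hx.1 k
  have hj := hx.2.2
  rw [coord_add_smul_sub]
  by_cases hki : k = i
  · subst hki; simp only [hij, if_true, if_false]; linarith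
  · by_cases hkj : k = j
    · subst hkj; simp only [hki, if_true, if_false]; linarith
    · simpa [hki, hkj] using hk

theorem volume_occupation_simplexStrip_le {b : AffineBasis ι ℝ E} (c : ℝ) {i j : ι} (hij : i ≠ j)
    {r : ℝ} (hr : 0 < r) (y : E) :
    volume {s : ℝ | s ∈ Icc (0 : ℝ) 1 ∧ y - s • r • (b i - b j) ∈ simplexStrip b c i j}
      ≤ ENNReal.ofReal (c / r) := by
  have hsub : {s : ℝ | s ∈ Icc (0 : ℝ) 1 ∧ y - s • r • (b i - b j) ∈ simplexStrip b c i j}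
      ⊆ Ico ((b.coord i y - c) / r) (b.coord i y / r) := by
    rintro s ⟨-, hs⟩
    have hcoord : b.coord i (y - s • r • (b i - b j)) = b.coord i y - s * r := by
      rw [smul_smul, sub_eq_add_neg, ← neg_smul, coord_add_smul_sub]
      simp [hij, sub_eq_add_neg]
    have hpos := mem_openSimplex.1 hs.1 i
    have hle := hs.2.1
    rw [hcoord] at hpos hle
    exact ⟨by rw [div_le_iff₀ hr]; linarith, by rw [lt_div_iff₀ hr]; linarith⟩
  calc _ ≤ volume (Ico ((b.coord i y - c) / r) (b.coord i y / r)) := measure_mono hsub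
    _ = ENNReal.ofReal (c / r) := by rw [Real.volume_Ico]; congr 1; ring

variable [FiniteDimensional ℝ E] [MeasurableSpace E] [BorelSpace E] {μ : Measure E}
  [μ.IsAddHaarMeasure] {w : E → ℝ} {V : ℝ≥0}

theorem setLIntegral_simplexStrip_le_shift {b : AffineBasis ι ℝ E} (c : ℝ) {i j : ι}
    (hij : i ≠ j) (hwm : Measurable w) (hw : LocallyIntegrable w μ)
    (hV : HasVariationBound μ w (openSimplex b) V) {r : ℝ} (hr : 0 < r)
    (hr' : r < (Fintype.card ι : ℝ)⁻¹) :
    ∫⁻ x in simplexStrip b c i j, ‖w x‖ₑ ∂μ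
      ≤ (∫⁻ x in simplexStrip b c i j, ‖w (x + r • (b i - b j))‖ₑ ∂μ)
        + ENNReal.ofReal c * (‖b i - b j‖ₑ * V) := by
  have hshift : ∫⁻ x in simplexStrip b c i j, ‖w (x + r • (b i - b j)) - w x‖ₑ ∂μ
      ≤ ENNReal.ofReal (c / r) * (‖r • (b i - b j)‖ₑ * V) := by
    refine hV.setLIntegral_shift_sub_le hw (isOpen_openSimplex b)
      (measurableSet_simplexStrip b c i j) (fun x hx s hs ↦ ?_)
      (volume_occupation_simplexStrip_le c hij hr)
    rw [smul_smul]
    exact add_smul_mem_openSimplex_of_mem_simplexStrip hij hx (mul_nonneg hs.1 hr.le)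
      ((mul_le_of_le_one_left hr.le hs.2).trans_lt hr')
  have hscale : ENNReal.ofReal (c / r) * ‖r • (b i - b j)‖ₑ = ENNReal.ofReal c * ‖b i - b j‖ₑ := by
    rw [enorm_smul, ← mul_assoc, Real.enorm_of_nonneg hr.le, ← ENNReal.ofReal_mul' hr.le,
      div_mul_cancel₀ _ hr.ne']
  calc ∫⁻ x in simplexStrip b c i j, ‖w x‖ₑ ∂μ
      ≤ ∫⁻ x in simplexStrip b c i j,
          (‖w (x + r • (b i - b j))‖ₑ + ‖w (x + r • (b i - b j)) - w x‖ₑ) ∂μ := by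
        refine lintegral_mono fun x ↦ ?_
        simpa using enorm_sub_le (a := w (x + r • (b i - b j)))
          (b := w (x + r • (b i - b j)) - w x)
    _ = _ := lintegral_add_left (by fun_prop) _
    _ ≤ _ := by
        rw [← mul_assoc, ← hscale, mul_assoc]
        gcongr

theorem setLIntegral_simplexStrip_le_of_ne {b : AffineBasis ι ℝ E} (c : ℝ) {i j : ι}
    (hij : i ≠ j) (hwm : Measurable w) (hw : LocallyIntegrable w μ)
    (hV : HasVariationBound μ w (openSimplex b) V) :
    ∫⁻ x in simplexStrip b c i j, ‖w x‖ₑ ∂μ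
      ≤ ENNReal.ofReal c * (Fintype.card ι * (∫⁻ x, ‖w x‖ₑ ∂μ) + ‖b i - b j‖ₑ * V) := by
  have : Nonempty ι := b.nonempty
  set n : ℝ := (Fintype.card ι : ℝ)
  have hn : 0 < n := by simp [n, Fintype.card_pos]
  set ω := n⁻¹ • (b i - b j)
  have hswap : ∫⁻ s in Ioo (0 : ℝ) 1, ∫⁻ x in simplexStrip b c i j, ‖w (x + s • ω)‖ₑ ∂μ
      ≤ ENNReal.ofReal c * (Fintype.card ι * ∫⁻ x, ‖w x‖ₑ ∂μ) := by
    rw [restrict_Ioo_eq_restrict_Icc]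
    simpa [n, ENNReal.ofReal_mul', mul_assoc] using
      lintegral_setLIntegral_shift_le_of_occupation (μ := μ) hwm.enorm
        (measurableSet_simplexStrip b c i j)
        (volume_occupation_simplexStrip_le c hij (inv_pos.2 hn)) 0
  calc ∫⁻ x in simplexStrip b c i j, ‖w x‖ₑ ∂μ
      = ∫⁻ _ in Ioo (0 : ℝ) 1, ∫⁻ x in simplexStrip b c i j, ‖w x‖ₑ ∂μ := by simp
    _ ≤ ∫⁻ s in Ioo (0 : ℝ) 1, ((∫⁻ x in simplexStrip b c i j, ‖w (x + s • ω)‖ₑ ∂μ)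
          + ENNReal.ofReal c * (‖b i - b j‖ₑ * V)) := by
        refine setLIntegral_mono' measurableSet_Ioo fun s hs ↦ ?_
        rw [smul_smul]
        exact setLIntegral_simplexStrip_le_shift c hij hwm hw hV
          (mul_pos hs.1 (inv_pos.2 hn)) (mul_lt_of_lt_one_left (inv_pos.2 hn) hs.2)
    _ = (∫⁻ s in Ioo (0 : ℝ) 1, ∫⁻ x in simplexStrip b c i j, ‖w (x + s • ω)‖ₑ ∂μ)
          + ENNReal.ofReal c * (‖b i - b j‖ₑ * V) := by
        rw [lintegral_add_right _ measurable_const]; simp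
    _ ≤ _ := by rw [mul_add]; gcongr

theorem setLIntegral_simplexStrip_le {b : AffineBasis ι ℝ E} (c : ℝ) (i j : ι)
    (hwm : Measurable w) (hw : LocallyIntegrable w μ)
    (hV : HasVariationBound μ w (openSimplex b) V) :
    ∫⁻ x in simplexStrip b c i j, ‖w x‖ₑ ∂μ
      ≤ ENNReal.ofReal c * (Fintype.card ι * (∫⁻ x, ‖w x‖ₑ ∂μ) + ‖b i - b j‖ₑ * V) := by
  rcases ne_or_eq i j with hij | rfl
  · exact setLIntegral_simplexStrip_le_of_ne c hij hwm hw hV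
  · rcases (simplexStrip b c i i).eq_empty_or_nonempty with hempty | ⟨x, -, hxc, hcx⟩
    · simp [hempty]
    · have : Nonempty ι := b.nonempty
      have hone : 1 ≤ ENNReal.ofReal c * Fintype.card ι := by
        rw [← ENNReal.ofReal_natCast, ← ENNReal.ofReal_mul' (Nat.cast_nonneg _),
          ENNReal.one_le_ofReal]
        exact (inv_le_iff_one_le_mul₀ (by simp [Fintype.card_pos])).1 (hcx.trans hxc)
      calc ∫⁻ x in simplexStrip b c i i, ‖w x‖ₑ ∂μ ≤ 1 * ∫⁻ x, ‖w x‖ₑ ∂μ := by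
            rw [one_mul]; exact setLIntegral_le_lintegral _ _
        _ ≤ ENNReal.ofReal c * Fintype.card ι * ∫⁻ x, ‖w x‖ₑ ∂μ := by gcongr
        _ ≤ _ := by simp [mul_assoc]

end Strip

variable [FiniteDimensional ℝ E] [MeasurableSpace E] [BorelSpace E] {μ : Measure E}
  [μ.IsAddHaarMeasure] {w : E → ℝ} {V : ℝ≥0}

theorem HasVariationBound.setLIntegral_openSimplex_shift_sub_le {b : AffineBasis ι ℝ E}
    (hV : HasVariationBound μ w (openSimplex b) V) (hw : LocallyIntegrable w μ) (ρ : E) :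
    ∫⁻ x in {x ∈ openSimplex b | x + ρ ∈ openSimplex b}, ‖w (x + ρ) - w x‖ₑ ∂μ
      ≤ ‖ρ‖ₑ * V := by
  have hopen := isOpen_openSimplex b
  have hP : MeasurableSet {x ∈ openSimplex b | x + ρ ∈ openSimplex b} :=
    hopen.measurableSet.inter (hopen.measurableSet.preimage (measurable_add_const ρ))
  refine (hV.setLIntegral_shift_sub_le (τ := 1) hw hopen hP (fun x hx s hs ↦ ?_)
    fun y ↦ ?_).trans_eq (one_mul _)
  · simpa using (convex_openSimplex b).add_smul_sub_mem hx.1 hx.2 hs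
  · simpa using measure_mono (μ := volume) (sep_subset (Icc (0 : ℝ) 1) _)

variable [Finite ι]

theorem exists_setLIntegral_exit_le (μ : Measure E) [μ.IsAddHaarMeasure] (b : AffineBasis ι ℝ E) :
    ∃ C : ℝ≥0, ∀ (w : E → ℝ) (V : ℝ≥0), Measurable w → LocallyIntegrable w μ →
      HasVariationBound μ w (openSimplex b) V → ∀ ρ : E,
        ∫⁻ x in {x ∈ openSimplex b | x + ρ ∉ openSimplex b}, ‖w x‖ₑ ∂μ
          ≤ C * ‖ρ‖ₑ * ((∫⁻ x, ‖w x‖ₑ ∂μ) + V) := by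
  have := Fintype.ofFinite ι
  obtain ⟨L, hL⟩ := exists_exit_subset_iUnion_simplexStrip b
  refine ⟨L * ∑ i, ∑ j, (Fintype.card ι + ‖b i - b j‖₊), fun w V hwm hw hV ρ ↦ ?_⟩
  have hLρ : ENNReal.ofReal (L * ‖ρ‖) = L * ‖ρ‖ₑ := by
    rw [ENNReal.ofReal_mul L.coe_nonneg, ofReal_norm, ENNReal.ofReal_coe_nnreal]
  set I := ∫⁻ x, ‖w x‖ₑ ∂μ
  calc ∫⁻ x in {x ∈ openSimplex b | x + ρ ∉ openSimplex b}, ‖w x‖ₑ ∂μ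
      ≤ ∫⁻ x in ⋃ i, ⋃ j, simplexStrip b (L * ‖ρ‖) i j, ‖w x‖ₑ ∂μ := lintegral_mono_set (hL ρ)
    _ ≤ ∑ i, ∑ j, ∫⁻ x in simplexStrip b (L * ‖ρ‖) i j, ‖w x‖ₑ ∂μ := by
        refine (lintegral_iUnion_le _ _).trans ?_
        rw [tsum_fintype]
        exact Finset.sum_le_sum fun i _ ↦ (lintegral_iUnion_le _ _).trans_eq (tsum_fintype _)
    _ ≤ ∑ i, ∑ j, L * ‖ρ‖ₑ * (Fintype.card ι * I + ‖b i - b j‖ₑ * V) := by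
        gcongr with i _ j _
        rw [← hLρ]
        exact setLIntegral_simplexStrip_le _ i j hwm hw hV
    _ ≤ ∑ i, ∑ j, L * ‖ρ‖ₑ * ((Fintype.card ι + ‖b i - b j‖ₑ) * (I + V)) := by
        gcongr with i _ j _
        rw [add_mul]
        gcongr
        · exact le_self_add
        · exact le_add_self
    _ = _ := by
        push_cast
        simp_rw [← Finset.mul_sum, ← Finset.sum_mul, enorm_eq_nnnorm]
        ring

theorem exists_lintegral_shift_sub_le (μ : Measure E) [μ.IsAddHaarMeasure] {κ : Type*} [Finite κ]
    (b : κ → AffineBasis ι ℝ E) :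
    ∃ C : ℝ≥0, ∀ (w : E → ℝ) (V : ℝ≥0), Measurable w → LocallyIntegrable w μ →
      (∀ k, HasVariationBound μ w (openSimplex (b k)) V) →
      (∀ᵐ x ∂μ, (∀ k, x ∉ openSimplex (b k)) → w x = 0) → ∀ ρ : E,
        ∫⁻ x, ‖w (x + ρ) - w x‖ₑ ∂μ ≤ C * ‖ρ‖ₑ * ((∫⁻ x, ‖w x‖ₑ ∂μ) + V) := by
  have := Fintype.ofFinite κ
  choose C hC using fun k ↦ exists_setLIntegral_exit_le μ (b k)
  refine ⟨∑ k, (1 + (C k + C k)), fun w V hwm hw hV hzero ρ ↦ ?_⟩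
  set I := ∫⁻ x, ‖w x‖ₑ ∂μ
  calc ∫⁻ x, ‖w (x + ρ) - w x‖ₑ ∂μ ≤ _ :=
        lintegral_shift_sub_le_sum (fun k ↦ (isOpen_openSimplex (b k)).measurableSet) hwm hzero ρ
    _ ≤ ∑ k, (‖ρ‖ₑ * (I + V) + (C k * ‖ρ‖ₑ * (I + V) + C k * ‖ρ‖ₑ * (I + V))) := by
        gcongr with k
        · exact ((hV k).setLIntegral_openSimplex_shift_sub_le hw ρ).trans
            (by gcongr; exact le_add_self)
        · exact hC k w V hwm hw (hV k) ρ
        · exact (hC k w V hwm hw (hV k) (-ρ)).trans_eq (by rw [enorm_neg])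
    _ = _ := by
        push_cast
        simp_rw [mul_assoc, Finset.sum_mul]
        exact Finset.sum_congr rfl fun k _ ↦ by ring

end Simplex

section Triangle

/-- The determinant of two plane vectors. -/
def planeCross (v w : Pt) : ℝ := v 0 * w 1 - v 1 * w 0

/-- Twice the signed area of the triangle with vertices `b 0`, `b 1`, `b 2`. -/
def signedDoubleArea (b : AffineBasis (Fin 3) ℝ Pt) : ℝ := planeCross (b 1 - b 0) (b 2 - b 0)

theorem abs_planeCross_le (v w : Pt) : |planeCross v w| ≤ ‖v‖ * ‖w‖ := by
  rw [← abs_of_nonneg (by positivity : 0 ≤ ‖v‖ * ‖w‖), ← sq_le_sq, mul_pow,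
    EuclideanSpace.real_norm_sq_eq, EuclideanSpace.real_norm_sq_eq, Fin.sum_univ_two,
    Fin.sum_univ_two, planeCross]
  nlinarith [sq_nonneg (v 0 * w 0 + v 1 * w 1)]

theorem planeCross_edges_eq (b : AffineBasis (Fin 3) ℝ Pt) (i : Fin 3) :
    planeCross (b (i + 1) - b i) (b (i + 2) - b i) = signedDoubleArea b := by
  fin_cases i <;>
    simp only [signedDoubleArea, planeCross, PiLp.sub_apply, Fin.zero_eta, Fin.mk_one,
      Fin.reduceFinMk, Fin.reduceAdd, zero_add] <;>
    ring

theorem signedDoubleArea_mul_coord (b : AffineBasis (Fin 3) ℝ Pt) (i : Fin 3) (x : Pt) :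
    signedDoubleArea b * b.coord i x
      = planeCross (b (i + 2) - b (i + 1)) (x - b (i + 1)) := by
  have hsum := b.sum_coord_apply_eq_one x
  have hcomb := b.linear_combination_coord_eq_self x
  have h0 := congrArg (fun y : Pt ↦ y 0) hcomb
  have h1 := congrArg (fun y : Pt ↦ y 1) hcomb
  simp only [Fin.sum_univ_three, PiLp.add_apply, PiLp.smul_apply, smul_eq_mul] at hsum h0 h1
  simp only [planeCross, signedDoubleArea, PiLp.sub_apply]
  rw [← h0, ← h1]
  fin_cases i <;> simp only [Fin.zero_eta, Fin.mk_one, Fin.reduceFinMk, Fin.reduceAdd, zero_add]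
  · linear_combination -((b 2 0 - b 1 0) * b 1 1 - (b 2 1 - b 1 1) * b 1 0) * hsum
  · linear_combination -((b 0 0 - b 2 0) * b 2 1 - (b 0 1 - b 2 1) * b 2 0) * hsum
  · linear_combination -((b 1 0 - b 0 0) * b 0 1 - (b 1 1 - b 0 1) * b 0 0) * hsum

theorem signedDoubleArea_ne_zero (b : AffineBasis (Fin 3) ℝ Pt) : signedDoubleArea b ≠ 0 := by
  intro h
  have hzero (w : Pt) : planeCross (b 2 - b 1) w = 0 := by
    simpa [h] using (signedDoubleArea_mul_coord b 0 (w + b 1)).symm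
  have h0 := hzero !₂[0, 1]
  have h1 := hzero !₂[1, 0]
  simp only [planeCross, PiLp.sub_apply] at h0 h1
  refine (b.ind.injective.ne (by decide : (2 : Fin 3) ≠ 1)) (PiLp.ext fun j ↦ ?_)
  fin_cases j <;> simp at h0 h1 ⊢ <;> linarith

/-- The affine parametrization of the triangle `b` by `{(s, r) | 0 < s, 0 < r, s + r < 1}` that
sends the origin to the vertex `b i`. -/
def triangleParam (b : AffineBasis (Fin 3) ℝ Pt) (i : Fin 3) (p : ℝ × ℝ) : Pt :=
  b i + p.1 • (b (i + 2) - b i) + p.2 • (b (i + 1) - b i)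

theorem coord_triangleParam (b : AffineBasis (Fin 3) ℝ Pt) (i : Fin 3) (p : ℝ × ℝ) :
    b.coord i (triangleParam b i p) = 1 - p.1 - p.2 ∧
      b.coord (i + 1) (triangleParam b i p) = p.2 ∧
      b.coord (i + 2) (triangleParam b i p) = p.1 := by
  simp only [triangleParam, coord_add_smul_sub]
  fin_cases i <;> simp <;> ring

theorem continuous_triangleParam (b : AffineBasis (Fin 3) ℝ Pt) (i : Fin 3) :
    Continuous (triangleParam b i) := by
  unfold triangleParam; fun_prop

theorem triangleParam_injective (b : AffineBasis (Fin 3) ℝ Pt) (i : Fin 3) :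
    Function.Injective (triangleParam b i) := fun p q hpq ↦ by
  have hp := coord_triangleParam b i p
  rw [hpq] at hp
  have hq := coord_triangleParam b i q
  exact Prod.ext (hp.2.2.symm.trans hq.2.2) (hp.2.1.symm.trans hq.2.1)

theorem forall_fin_three_iff {P : Fin 3 → Prop} (i : Fin 3) :
    (∀ j, P j) ↔ P i ∧ P (i + 1) ∧ P (i + 2) := by
  refine ⟨fun h ↦ ⟨h _, h _, h _⟩, fun ⟨h0, h1, h2⟩ j ↦ ?_⟩
  obtain rfl | rfl | rfl : j = i ∨ j = i + 1 ∨ j = i + 2 := by omega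
  exacts [h0, h1, h2]

theorem triangleParam_mem_convexHull {b : AffineBasis (Fin 3) ℝ Pt} {i : Fin 3} {p : ℝ × ℝ} :
    triangleParam b i p ∈ convexHull ℝ (range b) ↔ 0 ≤ 1 - p.1 - p.2 ∧ 0 ≤ p.2 ∧ 0 ≤ p.1 := by
  obtain ⟨h0, h1, h2⟩ := coord_triangleParam b i p
  rw [b.convexHull_eq_nonneg_coord, mem_ofPred_eq, forall_fin_three_iff i, h0, h1, h2]

theorem preimage_triangleParam_openSimplex (b : AffineBasis (Fin 3) ℝ Pt) (i : Fin 3) :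
    triangleParam b i ⁻¹' openSimplex b = regionBetween 0 (fun s ↦ 1 - s) (Ioo 0 1) := by
  ext p
  obtain ⟨h0, h1, h2⟩ := coord_triangleParam b i p
  rw [mem_preimage, mem_openSimplex, forall_fin_three_iff i, h0, h1, h2]
  simp only [regionBetween, mem_ofPred_eq, mem_Ioo, Pi.zero_apply]
  exact ⟨fun ⟨_, hr, hs⟩ ↦ ⟨⟨hs, by linarith⟩, hr, by linarith⟩,
    fun ⟨⟨hs, _⟩, hr, _⟩ ↦ ⟨by linarith, hr, hs⟩⟩

theorem measurableEmbedding_triangleParam (b : AffineBasis (Fin 3) ℝ Pt) (i : Fin 3) :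
    MeasurableEmbedding (triangleParam b i) :=
  (continuous_triangleParam b i).measurableEmbedding (triangleParam_injective b i)

theorem map_triangleParam_volume (b : AffineBasis (Fin 3) ℝ Pt) (i : Fin 3) :
    Measure.map (triangleParam b i) volume = ENNReal.ofReal |signedDoubleArea b|⁻¹ • volume := by
  let M : Matrix (Fin 2) (Fin 2) ℝ := Matrix.of fun k ↦ ![(b (i + 2) - b i) k, (b (i + 1) - b i) k]
  let L : (Fin 2 → ℝ) →ₗ[ℝ] (Fin 2 → ℝ) := Matrix.toLin' M
  have hdet : LinearMap.det L = -signedDoubleArea b := by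
    rw [LinearMap.det_toLin', ← planeCross_edges_eq b i, Matrix.det_fin_two]
    simp only [M, planeCross, Matrix.of_apply, Matrix.cons_val_zero, Matrix.cons_val_one]
    ring
  have hL : Measure.map L volume = ENNReal.ofReal |signedDoubleArea b|⁻¹ • volume := by
    rw [Measure.map_linearMap_addHaar_pi_eq_smul_addHaar (by simp [hdet, signedDoubleArea_ne_zero])]
    simp [hdet, abs_inv]
  have hcomp : triangleParam b i
      = (b i + ·) ∘ (WithLp.toLp 2) ∘ L ∘ (MeasurableEquiv.finTwoArrow (α := ℝ)).symm := by
    ext p k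
    simp [triangleParam, L, M]
    ring
  rw [hcomp, ← Measure.map_map (by fun_prop) (by fun_prop),
    ← Measure.map_map (by fun_prop) (by fun_prop),
    ← Measure.map_map (by fun_prop) (MeasurableEquiv.measurable _),
    (volume_preserving_finTwoArrow ℝ).symm.map_eq, hL, Measure.map_smul,
    (PiLp.volume_preserving_toLp (Fin 2)).map_eq, Measure.map_smul, map_add_left_eq_self]

theorem integrableOn_openSimplex_iff (b : AffineBasis (Fin 3) ℝ Pt) (i : Fin 3) {f : Pt → ℝ} :
    IntegrableOn f (openSimplex b) ↔
      IntegrableOn (f ∘ triangleParam b i) (regionBetween 0 (fun s ↦ 1 - s) (Ioo 0 1)) := by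
  rw [← preimage_triangleParam_openSimplex b i,
    ← (measurableEmbedding_triangleParam b i).integrableOn_map_iff, map_triangleParam_volume,
    IntegrableOn, IntegrableOn, Measure.restrict_smul, integrable_smul_measure (by
      simp [signedDoubleArea_ne_zero]) ENNReal.ofReal_ne_top]

theorem setIntegral_openSimplex (b : AffineBasis (Fin 3) ℝ Pt) (i : Fin 3) (f : Pt → ℝ) :
    ∫ x in openSimplex b, f x = |signedDoubleArea b| *
      ∫ p in regionBetween 0 (fun s ↦ 1 - s) (Ioo 0 1), f (triangleParam b i p) := by
  rw [← preimage_triangleParam_openSimplex b i,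
    ← (measurableEmbedding_triangleParam b i).setIntegral_map, map_triangleParam_volume,
    Measure.restrict_smul, integral_smul_measure, ENNReal.toReal_ofReal (by positivity),
    smul_eq_mul, mul_inv_cancel_left₀ (by simp [signedDoubleArea_ne_zero])]

theorem setIntegral_regionBetween {f g : ℝ → ℝ} (hf : Measurable f) (hg : Measurable g)
    {s : Set ℝ} (hs : MeasurableSet s) {F : ℝ × ℝ → ℝ}
    (hF : IntegrableOn F (regionBetween f g s)) :
    ∫ p in regionBetween f g s, F p = ∫ x in s, ∫ y in Ioo (f x) (g x), F (x, y) := by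
  have hmeas := measurableSet_regionBetween hf hg hs
  rw [← integral_indicator hmeas, Measure.volume_eq_prod,
    integral_prod _ (hF.integrable_indicator hmeas), ← integral_indicator hs]
  refine integral_congr_ae (.of_forall fun x ↦ ?_)
  by_cases hx : x ∈ s
  · rw [indicator_of_mem hx, ← integral_indicator measurableSet_Ioo]
    simp [indicator, regionBetween, hx]
  · simp [indicator, regionBetween, hx]

theorem ae_integrableOn_of_integrableOn_regionBetween {f g : ℝ → ℝ} (hf : Measurable f)
    (hg : Measurable g) {s : Set ℝ} (hs : MeasurableSet s) {F : ℝ × ℝ → ℝ}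
    (hF : IntegrableOn F (regionBetween f g s)) :
    ∀ᵐ x, x ∈ s → IntegrableOn (fun y ↦ F (x, y)) (Ioo (f x) (g x)) := by
  have hmeas := measurableSet_regionBetween hf hg hs
  filter_upwards [((integrable_indicator_iff hmeas).2 hF).prod_right_ae] with x hx hxs
  rw [← integrable_indicator_iff measurableSet_Ioo]
  exact hx.congr (.of_forall fun y ↦ by simp [indicator, regionBetween, hxs])

/-- The mean value of `f` over the segment from `p` to `q`. -/
def segmentMean (p q : Pt) (f : Pt → ℝ) : ℝ := ∫ s in (0 : ℝ)..1, f (p + s • (q - p))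

theorem segmentMean_comm (p q : Pt) (f : Pt → ℝ) : segmentMean p q f = segmentMean q p f := by
  have h := intervalIntegral.integral_comp_sub_left (a := 0) (b := 1)
    (fun s ↦ f (q + s • (p - q))) (1 : ℝ)
  rw [sub_self, sub_zero] at h
  rw [segmentMean, segmentMean, ← h]
  congr! 3 with s
  module

/-- `f` is the continuous representative of a `W^{1,1}` function on the triangle `b` that is
continuous up to the boundary and classically differentiable inside. -/
structure IsW11 (b : AffineBasis (Fin 3) ℝ Pt) (f : Pt → ℝ) : Prop where
  continuousOn : ContinuousOn f (convexHull ℝ (range b))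
  differentiableOn : DifferentiableOn ℝ f (openSimplex b)
  integrableOn_fderiv : IntegrableOn (fderiv ℝ f) (openSimplex b)

variable {b : AffineBasis (Fin 3) ℝ Pt} {f g : Pt → ℝ}

theorem IsW11.integrableOn (hf : IsW11 b f) : IntegrableOn f (openSimplex b) :=
  (hf.continuousOn.integrableOn_compact
    ((finite_range b).isCompact_convexHull ℝ)).mono_set interior_subset

theorem IsW11.integrableOn_fderiv_apply (hf : IsW11 b f) (ω : Pt) :
    IntegrableOn (fun x ↦ fderiv ℝ f x ω) (openSimplex b) :=
  hf.integrableOn_fderiv.apply_continuousLinearMap ω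

theorem IsW11.differentiableAt (hf : IsW11 b f) {x : Pt} (hx : x ∈ openSimplex b) :
    DifferentiableAt ℝ f x :=
  (hf.differentiableOn x hx).differentiableAt ((isOpen_openSimplex b).mem_nhds hx)

theorem IsW11.intervalIntegrable_segment (hf : IsW11 b f) (i j : Fin 3) :
    IntervalIntegrable (fun s ↦ f (b i + s • (b j - b i))) volume 0 1 := by
  refine ContinuousOn.intervalIntegrable_of_Icc zero_le_one
    (hf.continuousOn.comp (by fun_prop) fun s hs ↦ ?_)
  exact (convex_convexHull ℝ _).add_smul_sub_mem (subset_convexHull ℝ _ (mem_range_self i))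
    (subset_convexHull ℝ _ (mem_range_self j)) hs

theorem IsW11.integral_fderiv_segment (hf : IsW11 b f) (i : Fin 3) {s : ℝ} (hs : s ∈ Ioo (0 : ℝ) 1)
    (hInt : IntegrableOn (fun r ↦ fderiv ℝ f (triangleParam b i (s, r)) (b (i + 1) - b i))
      (Ioo 0 (1 - s))) :
    ∫ r in Ioo 0 (1 - s), fderiv ℝ f (triangleParam b i (s, r)) (b (i + 1) - b i) =
      f (b (i + 1) + s • (b (i + 2) - b (i + 1))) - f (b i + s • (b (i + 2) - b i)) := by
  have hle : 0 ≤ 1 - s := by linarith [hs.2]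
  have hmem {r : ℝ} (hr : r ∈ Ioo 0 (1 - s)) : triangleParam b i (s, r) ∈ openSimplex b := by
    rw [← mem_preimage, preimage_triangleParam_openSimplex]; exact ⟨hs, hr⟩
  have hmem_closed {r : ℝ} (hr : r ∈ Icc 0 (1 - s)) :
      triangleParam b i (s, r) ∈ convexHull ℝ (range b) :=
    triangleParam_mem_convexHull.2 ⟨by linarith [hr.2], hr.1, hs.1.le⟩
  have hderiv {r : ℝ} (hr : r ∈ Ioo 0 (1 - s)) :
      HasDerivAt (fun r ↦ f (triangleParam b i (s, r)))
        (fderiv ℝ f (triangleParam b i (s, r)) (b (i + 1) - b i)) r := by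
    refine (hf.differentiableAt (hmem hr)).hasFDerivAt.comp_hasDerivAt r ?_
    simpa [triangleParam] using ((hasDerivAt_id r).smul_const (b (i + 1) - b i)).const_add
      (b i + s • (b (i + 2) - b i))
  have hcont : ContinuousOn (fun r ↦ f (triangleParam b i (s, r))) (Icc 0 (1 - s)) :=
    hf.continuousOn.comp ((continuous_triangleParam b i).comp (by fun_prop)).continuousOn
      fun r hr ↦ hmem_closed hr
  have hstart : triangleParam b i (s, 0) = b i + s • (b (i + 2) - b i) := by
    simp [triangleParam]
  have hend : triangleParam b i (s, 1 - s) = b (i + 1) + s • (b (i + 2) - b (i + 1)) := by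
    simp only [triangleParam]; module
  rw [← integral_Ioc_eq_integral_Ioo, ← intervalIntegral.integral_of_le hle,
    intervalIntegral.integral_eq_sub_of_hasDerivAt_of_le hle hcont (fun r hr ↦ hderiv hr)
      ((intervalIntegrable_iff_integrableOn_Ioo_of_le hle).2 hInt), hend, hstart]

theorem IsW11.integral_fderiv_edge (hf : IsW11 b f) (i : Fin 3) :
    ∫ x in openSimplex b, fderiv ℝ f x (b (i + 1) - b i) = |signedDoubleArea b| *
      (segmentMean (b (i + 1)) (b (i + 2)) f - segmentMean (b i) (b (i + 2)) f) := by
  have hInt : IntegrableOn (fun p ↦ fderiv ℝ f (triangleParam b i p) (b (i + 1) - b i))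
      (regionBetween 0 (fun s ↦ 1 - s) (Ioo 0 1)) :=
    (integrableOn_openSimplex_iff b i).1 (hf.integrableOn_fderiv_apply _)
  rw [setIntegral_openSimplex b i, setIntegral_regionBetween measurable_zero (by fun_prop)
    measurableSet_Ioo hInt, segmentMean, segmentMean,
    ← intervalIntegral.integral_sub (hf.intervalIntegrable_segment _ _)
      (hf.intervalIntegrable_segment _ _), intervalIntegral.integral_of_le zero_le_one,
    integral_Ioc_eq_integral_Ioo]
  congr 1
  refine setIntegral_congr_ae measurableSet_Ioo ?_
  filter_upwards [ae_integrableOn_of_integrableOn_regionBetween measurable_zero (by fun_prop)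
    measurableSet_Ioo hInt] with s hs hmem
  exact hf.integral_fderiv_segment i hmem (hs hmem)

/-- The mean value of `f` over the edge of the triangle `b` opposite to the vertex `b i`. -/
def edgeMean (b : AffineBasis (Fin 3) ℝ Pt) (i : Fin 3) (f : Pt → ℝ) : ℝ :=
  segmentMean (b (i + 1)) (b (i + 2)) f

theorem IsW11.mul (hf : IsW11 b f) (hg : IsW11 b g) : IsW11 b (fun x ↦ f x * g x) where
  continuousOn := hf.continuousOn.mul hg.continuousOn
  differentiableOn := hf.differentiableOn.mul hg.differentiableOn
  integrableOn_fderiv := by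
    have hK := (finite_range b).isCompact_convexHull ℝ
    have hmeas := (isOpen_openSimplex b).measurableSet
    refine IntegrableOn.congr_fun
      ((hg.integrableOn_fderiv.continuousOn_smul_of_subset hf.continuousOn hK hmeas
        interior_subset).add (hf.integrableOn_fderiv.continuousOn_smul_of_subset hg.continuousOn hK
        hmeas interior_subset)) (fun x hx ↦ ?_) hmeas
    exact (fderiv_fun_mul (hf.differentiableAt hx) (hg.differentiableAt hx)).symm

theorem IsW11.comp {h : ℝ → ℝ} (hh : ContDiff ℝ 1 h) (hf : IsW11 b f) :
    IsW11 b (fun x ↦ h (f x)) where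
  continuousOn := hh.continuous.comp_continuousOn hf.continuousOn
  differentiableOn := (hh.differentiable one_ne_zero).comp_differentiableOn hf.differentiableOn
  integrableOn_fderiv := by
    have hmeas := (isOpen_openSimplex b).measurableSet
    refine IntegrableOn.congr_fun (hf.integrableOn_fderiv.continuousOn_smul_of_subset
      (hh.continuous_deriv_one.comp_continuousOn hf.continuousOn)
      ((finite_range b).isCompact_convexHull ℝ) hmeas interior_subset) (fun x hx ↦ ?_) hmeas
    exact ((hh.differentiable one_ne_zero _).hasDerivAt.comp_hasFDerivAt x
      (hf.differentiableAt hx).hasFDerivAt).fderiv.symm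

theorem isW11_of_contDiff (b : AffineBasis (Fin 3) ℝ Pt) (hf : ContDiff ℝ 1 f) : IsW11 b f where
  continuousOn := hf.continuous.continuousOn
  differentiableOn := (hf.differentiable one_ne_zero).differentiableOn
  integrableOn_fderiv := ((hf.continuous_fderiv one_ne_zero).continuousOn.integrableOn_compact
    ((finite_range b).isCompact_convexHull ℝ)).mono_set interior_subset

theorem IsW11.fderiv_mul_apply (hf : IsW11 b f) (hg : IsW11 b g) {x : Pt} (hx : x ∈ openSimplex b)
    (ω : Pt) : fderiv ℝ (fun x ↦ f x * g x) x ω = f x * fderiv ℝ g x ω + g x * fderiv ℝ f x ω := by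
  rw [fderiv_fun_mul (hf.differentiableAt hx) (hg.differentiableAt hx)]
  rfl

theorem IsW11.integral_fderiv_sub (hf : IsW11 b f) (i j : Fin 3) :
    ∫ x in openSimplex b, fderiv ℝ f x (b j - b i)
      = |signedDoubleArea b| * (edgeMean b i f - edgeMean b j f) := by
  have hnext (k : Fin 3) : ∫ x in openSimplex b, fderiv ℝ f x (b (k + 1) - b k)
      = |signedDoubleArea b| * (edgeMean b k f - edgeMean b (k + 1) f) := by
    rw [hf.integral_fderiv_edge, edgeMean, edgeMean, segmentMean_comm (b k)]
    fin_cases k <;> rfl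
  obtain rfl | rfl | rfl : j = i ∨ j = i + 1 ∨ i = j + 1 := by decide +revert
  · simp
  · exact hnext i
  · simp_rw [← neg_sub (b (j + 1)), map_neg, integral_neg, hnext]
    ring

theorem IsW11.integral_fderiv (hf : IsW11 b f) (ω : Pt) :
    ∫ x in openSimplex b, fderiv ℝ f x ω
      = -∑ i, |signedDoubleArea b| * (b.coord i).linear ω * edgeMean b i f := by
  have hω : ω = ∑ i, (b.coord i).linear ω • (b i - b 0) := by
    simp only [smul_sub, Finset.sum_sub_distrib, ← Finset.sum_smul, sum_linear_coord,
      sum_linear_coord_smul, zero_smul, sub_zero]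
  calc ∫ x in openSimplex b, fderiv ℝ f x ω
      = ∫ x in openSimplex b, ∑ i, (b.coord i).linear ω * fderiv ℝ f x (b i - b 0) := by
        simp_rw [← smul_eq_mul, ← map_smul, ← map_sum, ← hω]
    _ = ∑ i, (b.coord i).linear ω * (|signedDoubleArea b| * (edgeMean b 0 f - edgeMean b i f)) := by
        rw [integral_finsetSum _ fun i _ ↦ (hf.integrableOn_fderiv_apply _).const_mul _]
        simp_rw [integral_const_mul, hf.integral_fderiv_sub]
    _ = |signedDoubleArea b| * edgeMean b 0 f * ∑ i, (b.coord i).linear ω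
          - ∑ i, |signedDoubleArea b| * (b.coord i).linear ω * edgeMean b i f := by
        rw [Finset.mul_sum, ← Finset.sum_sub_distrib]
        exact Finset.sum_congr rfl fun i _ ↦ by ring
    _ = _ := by rw [sum_linear_coord, mul_zero, zero_sub]

theorem edgeMean_mul_coord_self (b : AffineBasis (Fin 3) ℝ Pt) (i : Fin 3) (f : Pt → ℝ) :
    edgeMean b i (fun x ↦ f x * b.coord i x) = 0 := by
  have h1 : i ≠ i + 1 := by decide +revert
  have h2 : i ≠ i + 2 := by decide +revert
  simp [edgeMean, segmentMean, coord_add_smul_sub, h1, h2]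

theorem IsW11.edgeMean_eq_sum (hf : IsW11 b f) (i : Fin 3) :
    edgeMean b i f = ∑ j, edgeMean b i (fun x ↦ f x * b.coord j x) := by
  simp only [edgeMean, segmentMean]
  rw [← intervalIntegral.integral_finsetSum fun j _ ↦
    (hf.mul (isW11_of_contDiff b (contDiff_coord b j))).intervalIntegrable_segment _ _]
  simp only [← Finset.mul_sum, b.sum_coord_apply_eq_one, mul_one]

theorem IsW11.integrableOn_abs_add_coord_mul (hf : IsW11 b f) (d : ℝ) (j : Fin 3) :
    IntegrableOn (fun x ↦ |f x| + b.coord j x * (d * ‖fderiv ℝ f x‖)) (openSimplex b) :=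
  hf.integrableOn.abs.add (IntegrableOn.continuousOn_mul_of_subset
    (isW11_of_contDiff b (contDiff_coord b j)).continuousOn
    (hf.integrableOn_fderiv.norm.const_mul d) ((finite_range b).isCompact_convexHull ℝ)
    (isOpen_openSimplex b).measurableSet interior_subset)

/-- The product `f λⱼ` vanishes on the edge opposite to `b j`, so that its derivative in the
direction `b j - b i` sees only the values of `f` on the edge opposite to `b i`. -/
theorem IsW11.edgeMean_mul_coord_le (hf : IsW11 b f) {i : Fin 3} {d : ℝ}
    (hd : ∀ j, ‖b j - b i‖ ≤ d) (j : Fin 3) :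
    |signedDoubleArea b| * edgeMean b i (fun x ↦ f x * b.coord j x)
      ≤ ∫ x in openSimplex b, (|f x| + b.coord j x * (d * ‖fderiv ℝ f x‖)) := by
  have hcoord := isW11_of_contDiff b (contDiff_coord b j)
  have hmul := (hf.mul hcoord).integral_fderiv_sub i j
  rw [edgeMean_mul_coord_self, sub_zero] at hmul
  rw [← hmul]
  refine setIntegral_mono_on ((hf.mul hcoord).integrableOn_fderiv_apply _)
    (hf.integrableOn_abs_add_coord_mul d j)
    (isOpen_openSimplex b).measurableSet fun x hx ↦ ?_
  have hDf : fderiv ℝ f x (b j - b i) ≤ d * ‖fderiv ℝ f x‖ :=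
    calc _ ≤ ‖fderiv ℝ f x‖ * ‖b j - b i‖ :=
          (le_abs_self _).trans ((fderiv ℝ f x).le_opNorm (b j - b i))
      _ ≤ _ := by rw [mul_comm]; gcongr; exact hd j
  rw [hf.fderiv_mul_apply hcoord hx, fderiv_coord, linear_coord_sub, if_pos rfl]
  gcongr
  · split_ifs <;> simp [le_abs_self]
  · exact (mem_openSimplex.1 hx j).le

theorem IsW11.edgeMean_le (hf : IsW11 b f) {i : Fin 3} {d : ℝ} (hd : ∀ j, ‖b j - b i‖ ≤ d) :
    |signedDoubleArea b| * edgeMean b i f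
      ≤ ∫ x in openSimplex b, (3 * |f x| + d * ‖fderiv ℝ f x‖) := by
  calc |signedDoubleArea b| * edgeMean b i f
      = ∑ j, |signedDoubleArea b| * edgeMean b i (fun x ↦ f x * b.coord j x) := by
        rw [hf.edgeMean_eq_sum, Finset.mul_sum]
    _ ≤ ∑ j, ∫ x in openSimplex b, (|f x| + b.coord j x * (d * ‖fderiv ℝ f x‖)) :=
        Finset.sum_le_sum fun j _ ↦ hf.edgeMean_mul_coord_le hd j
    _ = ∫ x in openSimplex b, (3 * |f x| + d * ‖fderiv ℝ f x‖) := by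
        rw [← integral_finsetSum _ fun j _ ↦ hf.integrableOn_abs_add_coord_mul d j]
        simp only [Finset.sum_add_distrib, ← Finset.sum_mul, b.sum_coord_apply_eq_one]
        simp

end Triangle

section Neighbours

open Filter Topology

theorem eventually_add_smul_mem_openSimplex {E ι : Type*} [NormedAddCommGroup E] [NormedSpace ℝ E]
    [Finite ι] {b : AffineBasis ι ℝ E} {i : ι} {x v : E} (hi : b.coord i x = 0)
    (hpos : ∀ j ≠ i, 0 < b.coord j x) (hv : 0 < (b.coord i).linear v) :
    ∀ᶠ δ : ℝ in 𝓝[>] 0, x + δ • v ∈ openSimplex b := by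
  have hcoord (j : ι) (δ : ℝ) :
      b.coord j (x + δ • v) = b.coord j x + δ * (b.coord j).linear v := by
    rw [add_comm x, ← vadd_eq_add, AffineMap.map_vadd, map_smul, vadd_eq_add, smul_eq_mul, add_comm]
  simp only [mem_openSimplex, eventually_all, hcoord]
  intro j
  by_cases hj : j = i
  · subst hj
    filter_upwards [self_mem_nhdsWithin] with δ hδ
    rw [hi, zero_add]
    exact mul_pos hδ hv
  · refine nhdsWithin_le_nhds (ContinuousAt.eventually_lt continuousAt_const (by fun_prop) ?_)
    simpa using hpos j hj

variable {b b' : AffineBasis (Fin 3) ℝ Pt} {i j : Fin 3}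

/-- The edge of the triangle `b` opposite to the vertex `b i`, as an unordered pair of endpoints. -/
def oppositeEdge (b : AffineBasis (Fin 3) ℝ Pt) (i : Fin 3) : Sym2 Pt := s(b (i + 1), b (i + 2))

/-- The length of the edge of the triangle `b` opposite to the vertex `b i`. -/
def edgeLength (b : AffineBasis (Fin 3) ℝ Pt) (i : Fin 3) : ℝ := dist (b (i + 1)) (b (i + 2))

/-- The inner product of `ω` with the inward normal of the edge opposite to `b i`, the normal being
scaled to the length of that edge. -/
def edgeConormal (b : AffineBasis (Fin 3) ℝ Pt) (i : Fin 3) (ω : Pt) : ℝ :=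
  |signedDoubleArea b| * (b.coord i).linear ω

theorem oppositeEdge_injective (b : AffineBasis (Fin 3) ℝ Pt) :
    Function.Injective (oppositeEdge b) := fun i j hij ↦ by
  have hmap : s(i + 1, i + 2) = s(j + 1, j + 2) := Sym2.map.injective b.ind.injective hij
  rw [Sym2.eq_iff] at hmap
  omega

theorem edgeMean_congr (h : oppositeEdge b i = oppositeEdge b' j) (f : Pt → ℝ) :
    edgeMean b i f = edgeMean b' j f := by
  obtain ⟨h1, h2⟩ | ⟨h1, h2⟩ := Sym2.eq_iff.1 h
  · rw [edgeMean, h1, h2, edgeMean]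
  · rw [edgeMean, h1, h2, segmentMean_comm, edgeMean]

theorem edgeLength_congr (h : oppositeEdge b i = oppositeEdge b' j) :
    edgeLength b i = edgeLength b' j := by
  obtain ⟨h1, h2⟩ | ⟨h1, h2⟩ := Sym2.eq_iff.1 h
  · rw [edgeLength, h1, h2, edgeLength]
  · rw [edgeLength, h1, h2, dist_comm, edgeLength]

theorem signedDoubleArea_mul_linear_coord (b : AffineBasis (Fin 3) ℝ Pt) (i : Fin 3) (ω : Pt) :
    signedDoubleArea b * (b.coord i).linear ω = planeCross (b (i + 2) - b (i + 1)) ω := by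
  have hlin : (b.coord i).linear ω = b.coord i (ω + b (i + 1)) - b.coord i (b (i + 1)) := by
    simpa using (b.coord i).linearMap_vsub (ω + b (i + 1)) (b (i + 1))
  rw [hlin, mul_sub, signedDoubleArea_mul_coord, signedDoubleArea_mul_coord, add_sub_cancel_right,
    sub_self]
  simp [planeCross]

theorem abs_edgeConormal_le (b : AffineBasis (Fin 3) ℝ Pt) (i : Fin 3) (ω : Pt) :
    |edgeConormal b i ω| ≤ edgeLength b i * ‖ω‖ := by
  rw [edgeConormal, abs_mul, abs_abs, ← abs_mul, signedDoubleArea_mul_linear_coord, edgeLength,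
    dist_comm, dist_eq_norm]
  exact abs_planeCross_le _ _

theorem edgeConormal_sub_pos (b : AffineBasis (Fin 3) ℝ Pt) (i : Fin 3) :
    0 < edgeConormal b i (b i - b (i + 1)) := by
  have hi : i ≠ i + 1 := by omega
  rw [edgeConormal, linear_coord_sub, if_pos rfl, if_neg hi, sub_zero, mul_one, abs_pos]
  exact signedDoubleArea_ne_zero b

theorem edgeConormal_eq_or_eq_neg (h : oppositeEdge b i = oppositeEdge b' j) :
    edgeConormal b' j = edgeConormal b i ∨ edgeConormal b' j = -edgeConormal b i := by
  have hcross (v ω : Pt) : planeCross (-v) ω = -planeCross v ω := by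
    simp only [planeCross, PiLp.neg_apply]; ring
  have hsign (c : AffineBasis (Fin 3) ℝ Pt) (k : Fin 3) :
      edgeConormal c k = planeCross (c (k + 2) - c (k + 1)) ∨
        edgeConormal c k = -planeCross (c (k + 2) - c (k + 1)) := by
    refine (abs_choice (signedDoubleArea c)).imp (fun hc ↦ ?_) fun hc ↦ ?_ <;>
    · ext ω
      simp [edgeConormal, hc, ← signedDoubleArea_mul_linear_coord]
  have hedge : planeCross (b' (j + 2) - b' (j + 1)) = planeCross (b (i + 2) - b (i + 1)) ∨
      planeCross (b' (j + 2) - b' (j + 1)) = -planeCross (b (i + 2) - b (i + 1)) := by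
    obtain ⟨h1, h2⟩ | ⟨h1, h2⟩ := Sym2.eq_iff.1 h
    · exact .inl (by rw [h1, h2])
    · refine .inr (funext fun ω ↦ ?_)
      rw [h1, h2, Pi.neg_apply, ← hcross, neg_sub]
  obtain hb | hb := hsign b i <;> obtain hb' | hb' := hsign b' j <;> rw [hb, hb'] <;>
    simpa [neg_eq_iff_eq_neg, or_comm] using hedge

theorem edgeConormal_eq_neg (hdisj : Disjoint (openSimplex b) (openSimplex b'))
    (h : oppositeEdge b i = oppositeEdge b' j) : edgeConormal b' j = -edgeConormal b i := by
  refine (edgeConormal_eq_or_eq_neg h).resolve_left fun heq ↦ ?_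
  let m (c : AffineBasis (Fin 3) ℝ Pt) (k : Fin 3) : Pt :=
    c (k + 1) + (2⁻¹ : ℝ) • (c (k + 2) - c (k + 1))
  have hm : m b' j = m b i := by
    obtain ⟨h1, h2⟩ | ⟨h1, h2⟩ := Sym2.eq_iff.1 h
    · simp only [m, h1, h2]
    · simp only [m, h1, h2]
      module
  have hinside (c : AffineBasis (Fin 3) ℝ Pt) (k : Fin 3)
      (hpos : 0 < edgeConormal c k (b i - b (i + 1))) :
      ∀ᶠ δ : ℝ in 𝓝[>] 0, m c k + δ • (b i - b (i + 1)) ∈ openSimplex c := by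
    have hcoord (l : Fin 3) : c.coord l (m c k)
        = ((if l = k + 1 then 1 else 0) + if l = k + 2 then 1 else 0) / 2 := by
      rw [coord_add_smul_sub, c.coord_apply]
      split_ifs <;> norm_num
    refine eventually_add_smul_mem_openSimplex (i := k) ?_ (fun l hl ↦ ?_)
      (pos_of_mul_pos_right hpos (abs_nonneg _)) <;> rw [hcoord]
    · fin_cases k <;> simp
    · fin_cases k <;> fin_cases l <;> simp at hl ⊢
  obtain ⟨δ, hδ, hδ'⟩ := ((hinside b i (edgeConormal_sub_pos b i)).and
    (hinside b' j (heq ▸ edgeConormal_sub_pos b i))).exists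
  exact disjoint_left.1 hdisj hδ (hm ▸ hδ')

end Neighbours

section Pairing

variable {α : Type*} [Fintype α] {r : α → α → Prop} {g : α → ℝ}

theorem sum_pairs_add (hsymm : ∀ a c, r a c → r c a) (g : α → ℝ) :
    ∑ p : α × α with r p.1 p.2, (g p.1 + g p.2) = 2 * ∑ p : α × α with r p.1 p.2, g p.1 := by
  have hswap : ∑ p : α × α with r p.1 p.2, g p.2 = ∑ p : α × α with r p.1 p.2, g p.1 :=
    Finset.sum_equiv (Equiv.prodComm α α) (fun p ↦ by
      simpa using ⟨hsymm p.1 p.2, hsymm p.2 p.1⟩) fun p _ ↦ rfl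
  rw [Finset.sum_add_distrib, hswap, two_mul]

theorem sum_pairs_fst_of_unique (huniq : ∀ a c c', r a c → r a c' → c = c') (g : α → ℝ) :
    ∑ p : α × α with r p.1 p.2, g p.1 = ∑ a with ∃ c, r a c, g a := by
  rw [Finset.sum_filter, Finset.sum_filter, Fintype.sum_prod_type]
  refine Finset.sum_congr rfl fun a _ ↦ ?_
  split_ifs with h
  · obtain ⟨c, hc⟩ := h
    rw [Finset.sum_eq_single_of_mem c (Finset.mem_univ c) fun c' _ hne ↦
      if_neg fun hc' ↦ hne (huniq a c' c hc' hc), if_pos hc]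
  · exact Finset.sum_eq_zero fun c _ ↦ if_neg fun hc ↦ h ⟨c, hc⟩

theorem sum_eq_half_sum_pairs (hsymm : ∀ a c, r a c → r c a)
    (huniq : ∀ a c c', r a c → r a c' → c = c') (hg : ∀ a, (∀ c, ¬r a c) → g a = 0) :
    ∑ a, g a = 2⁻¹ * ∑ p : α × α with r p.1 p.2, (g p.1 + g p.2) := by
  rw [sum_pairs_add hsymm, inv_mul_cancel_left₀ two_ne_zero, sum_pairs_fst_of_unique huniq]
  refine (Finset.sum_filter_of_ne fun a _ ha ↦ ?_).symm
  contrapose! ha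
  exact hg a ha

theorem half_sum_pairs_le (hsymm : ∀ a c, r a c → r c a)
    (huniq : ∀ a c c', r a c → r a c' → c = c') (hg : ∀ a, 0 ≤ g a) :
    2⁻¹ * ∑ p : α × α with r p.1 p.2, (g p.1 + g p.2) ≤ ∑ a, g a := by
  rw [sum_pairs_add hsymm, inv_mul_cancel_left₀ two_ne_zero, sum_pairs_fst_of_unique huniq]
  exact Finset.sum_le_sum_of_subset_of_nonneg (Finset.filter_subset _ _) fun a _ _ ↦ hg a

end Pairing

section WithDensity

variable {α : Type*} [MeasurableSpace α] {μ : Measure α} {f : α → ℝ}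

theorem enorm_integral_mul_le_lintegral_withDensity {φ : α → ℝ} (hφ : Measurable φ)
    (hf : AEMeasurable f μ) :
    ‖∫ x, φ x * f x ∂μ‖ₑ ≤ ∫⁻ x, ‖φ x‖ₑ ∂μ.withDensity (‖f ·‖ₑ) := by
  rw [lintegral_withDensity_eq_lintegral_mul₀ hf.enorm hφ.enorm.aemeasurable]
  refine (enorm_integral_le_lintegral_enorm _).trans_eq (lintegral_congr fun x ↦ ?_)
  rw [enorm_mul, mul_comm, Pi.mul_apply]

theorem withDensity_enorm_univ (hf : Integrable f μ) :
    μ.withDensity (‖f ·‖ₑ) univ = ENNReal.ofReal (∫ x, |f x| ∂μ) := by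
  rw [withDensity_apply _ .univ, Measure.restrict_univ]
  exact (ofReal_integral_norm_eq_lintegral_enorm hf).symm

end WithDensity

section SegmentMeasure

/-- The uniform probability measure on the segment from `p` to `q`. -/
def segmentMeasure (p q : Pt) : Measure Pt :=
  (volume.restrict (Ioc (0 : ℝ) 1)).map fun s ↦ p + s • (q - p)

variable {p q : Pt} {f : Pt → ℝ}

theorem isClosed_segment (p q : Pt) : IsClosed (segment ℝ p q) := by
  rw [← convexHull_pair]
  exact (toFinite {p, q}).isClosed_convexHull ℝ

theorem ae_segmentMeasure_mem_segment (p q : Pt) : ∀ᵐ x ∂segmentMeasure p q, x ∈ segment ℝ p q := by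
  refine (ae_map_iff (by fun_prop) (isClosed_segment p q).measurableSet).2 ?_
  filter_upwards [ae_restrict_mem measurableSet_Ioc] with s hs
  exact (convex_segment p q).add_smul_sub_mem (left_mem_segment ℝ p q) (right_mem_segment ℝ p q)
    (Ioc_subset_Icc_self hs)

theorem aestronglyMeasurable_segmentMeasure (hf : ContinuousOn f (segment ℝ p q)) :
    AEStronglyMeasurable f (segmentMeasure p q) := by
  rw [← Measure.restrict_eq_self_of_ae_mem (ae_segmentMeasure_mem_segment p q)]
  exact hf.aestronglyMeasurable (isClosed_segment p q).measurableSet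

theorem integral_segmentMeasure (hf : ContinuousOn f (segment ℝ p q)) :
    ∫ x, f x ∂segmentMeasure p q = segmentMean p q f := by
  rw [segmentMean, intervalIntegral.integral_of_le zero_le_one, segmentMeasure,
    integral_map (by fun_prop) (aestronglyMeasurable_segmentMeasure hf)]

theorem integrable_segmentMeasure (hf : ContinuousOn f (segment ℝ p q)) :
    Integrable f (segmentMeasure p q) := by
  rw [segmentMeasure, integrable_map_measure (aestronglyMeasurable_segmentMeasure hf) (by fun_prop)]
  refine (ContinuousOn.integrableOn_Icc (hf.comp (by fun_prop) fun s hs ↦ ?_)).mono_set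
    Ioc_subset_Icc_self
  exact (convex_segment p q).add_smul_sub_mem (left_mem_segment ℝ p q) (right_mem_segment ℝ p q) hs

end SegmentMeasure

section Mesh

open scoped Function

variable {τ : Type*} {b : τ → AffineBasis (Fin 3) ℝ Pt} {w : τ → Pt → ℝ} {U : Set Pt}

theorem IsW11.continuousOn_segment {b : AffineBasis (Fin 3) ℝ Pt} {f : Pt → ℝ} (hf : IsW11 b f)
    (i j : Fin 3) : ContinuousOn f (segment ℝ (b i) (b j)) :=
  hf.continuousOn.mono (segment_subset_convexHull (mem_range_self i) (mem_range_self j))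

theorem IsW11.integral_fderiv_mul {b : AffineBasis (Fin 3) ℝ Pt} {f φ : Pt → ℝ}
    (hφ : ContDiff ℝ 1 φ) (hf : IsW11 b f) (ω : Pt) :
    ∫ x in openSimplex b, fderiv ℝ φ x ω * f x =
      -(∑ i, edgeConormal b i ω * edgeMean b i fun x ↦ φ x * f x)
        - ∫ x in openSimplex b, φ x * fderiv ℝ f x ω := by
  have hφW := isW11_of_contDiff b hφ
  have hGreen := (hφW.mul hf).integral_fderiv ω
  have hInt : IntegrableOn (fun x ↦ φ x * fderiv ℝ f x ω) (openSimplex b) :=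
    IntegrableOn.continuousOn_mul_of_subset hφW.continuousOn (hf.integrableOn_fderiv_apply ω)
      ((finite_range b).isCompact_convexHull ℝ) (isOpen_openSimplex b).measurableSet
      interior_subset
  simp only [edgeConormal]
  rw [← hGreen, ← integral_sub ((hφW.mul hf).integrableOn_fderiv_apply ω) hInt]
  refine setIntegral_congr_fun (isOpen_openSimplex b).measurableSet fun x hx ↦ ?_
  simp only [hφW.fderiv_mul_apply hf hx]
  ring

/-- A half-edge is a pair `(t, i)`, standing for the edge opposite to the vertex `i` seen from the
triangle `t`. Two half-edges are opposite if they are the two sides of one edge. -/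
def IsOpposite (b : τ → AffineBasis (Fin 3) ℝ Pt) (h h' : τ × Fin 3) : Prop :=
  h.1 ≠ h'.1 ∧ oppositeEdge (b h.1) h.2 = oppositeEdge (b h'.1) h'.2

theorem IsOpposite.symm {h h' : τ × Fin 3} (hh : IsOpposite b h h') : IsOpposite b h' h :=
  ⟨hh.1.symm, hh.2.symm⟩

theorem IsOpposite.continuousOn_segment {h h' : τ × Fin 3} (hh : IsOpposite b h h') {f : Pt → ℝ}
    (hf : IsW11 (b h'.1) f) :
    ContinuousOn f (segment ℝ (b h.1 (h.2 + 1)) (b h.1 (h.2 + 2))) := by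
  obtain ⟨h1, h2⟩ | ⟨h1, h2⟩ := Sym2.eq_iff.1 hh.2 <;> rw [h1, h2] <;>
    exact hf.continuousOn_segment _ _

theorem IsOpposite.edgeConormal_eq (hdisj : Pairwise (Disjoint on fun t ↦ openSimplex (b t)))
    {h h' : τ × Fin 3} (hh : IsOpposite b h h') :
    edgeConormal (b h'.1) h'.2 = -edgeConormal (b h.1) h.2 :=
  edgeConormal_eq_neg (hdisj hh.1) hh.2

theorem IsOpposite.unique (hdisj : Pairwise (Disjoint on fun t ↦ openSimplex (b t)))
    {h h' h'' : τ × Fin 3} (hh' : IsOpposite b h h') (hh'' : IsOpposite b h h'') : h' = h'' := by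
  have hedge := hh'.2.symm.trans hh''.2
  by_cases ht : h'.1 = h''.1
  · rw [ht] at hedge
    exact Prod.ext ht (oppositeEdge_injective _ hedge)
  · have hpos := edgeConormal_sub_pos (b h'.1) h'.2
    have hneg := edgeConormal_eq_neg (hdisj ht) hedge
    rw [hh''.edgeConormal_eq hdisj, ← hh'.edgeConormal_eq hdisj] at hneg
    have := congrFun hneg (b h'.1 h'.2 - b h'.1 (h'.2 + 1))
    simp only [Pi.neg_apply] at this
    linarith

variable [Fintype τ]

/-- The piecewise function that equals `w t` in the open triangle `b t`, and `0` elsewhere. -/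
def piecewiseFun (b : τ → AffineBasis (Fin 3) ℝ Pt) (w : τ → Pt → ℝ) : Pt → ℝ :=
  ∑ t, (openSimplex (b t)).indicator (w t)

/-- The pairs of opposite half-edges of a mesh; each interior edge gives two pairs. -/
def oppositePairs (b : τ → AffineBasis (Fin 3) ℝ Pt) : Finset ((τ × Fin 3) × (τ × Fin 3)) :=
  {p | IsOpposite b p.1 p.2}

/-- The total variation of a piecewise function: the `L¹` norms of the gradients and of the jumps,
where `2⁻¹` compensates that each interior edge gives two pairs of half-edges. -/
def meshVariation (b : τ → AffineBasis (Fin 3) ℝ Pt) (w : τ → Pt → ℝ) : ℝ :=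
  (∑ t, ∫ x in openSimplex (b t), ‖fderiv ℝ (w t) x‖) +
    ∑ p ∈ oppositePairs b, 2⁻¹ * edgeLength (b p.1.1) p.1.2 *
      edgeMean (b p.1.1) p.1.2 (fun x ↦ |w p.1.1 x - w p.2.1 x|)

/-- A measure dominating the distributional derivative in direction `ω` of a piecewise function:
the absolute values of the derivatives in the triangles and of the jumps across the edges. -/
def meshMeasure (b : τ → AffineBasis (Fin 3) ℝ Pt) (w : τ → Pt → ℝ) (ω : Pt) : Measure Pt :=
  ∑ t, (volume.restrict (openSimplex (b t))).withDensity (‖fderiv ℝ (w t) · ω‖ₑ) +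
    ∑ p ∈ oppositePairs b, ENNReal.ofReal (2⁻¹ * |edgeConormal (b p.1.1) p.1.2 ω|) •
      (segmentMeasure (b p.1.1 (p.1.2 + 1)) (b p.1.1 (p.1.2 + 2))).withDensity
        (fun x ↦ ‖w p.1.1 x - w p.2.1 x‖ₑ)

theorem continuousOn_jump (hw : ∀ t, IsW11 (b t) (w t)) {p : (τ × Fin 3) × (τ × Fin 3)}
    (hp : p ∈ oppositePairs b) : ContinuousOn (fun x ↦ w p.1.1 x - w p.2.1 x)
      (segment ℝ (b p.1.1 (p.1.2 + 1)) (b p.1.1 (p.1.2 + 2))) :=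
  ((hw p.1.1).continuousOn_segment _ _).sub
    ((Finset.mem_filter.1 hp).2.continuousOn_segment (hw p.2.1))

theorem sum_edgeConormal_mul_edgeMean (hw : ∀ t, IsW11 (b t) (w t))
    (hdisj : Pairwise (Disjoint on fun t ↦ openSimplex (b t)))
    (hbdry : ∀ h, (∀ h', ¬IsOpposite b h h') →
      Disjoint (segment ℝ (b h.1 (h.2 + 1)) (b h.1 (h.2 + 2))) U)
    {φ : Pt → ℝ} (hφ : ContDiff ℝ 1 φ) (hφU : tsupport φ ⊆ U) (ω : Pt) :
    ∑ h : τ × Fin 3, edgeConormal (b h.1) h.2 ω * edgeMean (b h.1) h.2 (fun x ↦ φ x * w h.1 x) =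
      ∑ p ∈ oppositePairs b, 2⁻¹ * edgeConormal (b p.1.1) p.1.2 ω *
        ∫ x, φ x * (w p.1.1 x - w p.2.1 x)
          ∂segmentMeasure (b p.1.1 (p.1.2 + 1)) (b p.1.1 (p.1.2 + 2)) := by
  have hφW (t : τ) : IsW11 (b t) fun x ↦ φ x * w t x := (isW11_of_contDiff (b t) hφ).mul (hw t)
  rw [sum_eq_half_sum_pairs (r := IsOpposite b) (fun _ _ ↦ .symm)
    fun _ _ _ ↦ IsOpposite.unique hdisj]
  · rw [Finset.mul_sum]
    refine Finset.sum_congr rfl fun ⟨h, h'⟩ hh ↦ ?_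
    replace hh : IsOpposite b h h' := (Finset.mem_filter.1 hh).2
    have hcont := (hφW h.1).continuousOn_segment (h.2 + 1) (h.2 + 2)
    have hcont' := hh.continuousOn_segment (hφW h'.1)
    simp only [mul_sub]
    rw [hh.edgeConormal_eq hdisj, ← edgeMean_congr hh.2, Pi.neg_apply,
      integral_sub (integrable_segmentMeasure hcont) (integrable_segmentMeasure hcont'),
      integral_segmentMeasure hcont, integral_segmentMeasure hcont']
    simp only [edgeMean]
    ring
  · refine fun h hh ↦ mul_eq_zero_of_right _ ?_
    rw [edgeMean, ← integral_segmentMeasure ((hφW h.1).continuousOn_segment _ _)]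
    refine integral_eq_zero_of_ae ?_
    filter_upwards [ae_segmentMeasure_mem_segment _ _] with x hx
    rw [image_eq_zero_of_notMem_tsupport fun hxφ ↦ disjoint_left.1 (hbdry h hh) hx (hφU hxφ),
      zero_mul, Pi.zero_apply]

theorem integral_fderiv_mul_piecewiseFun (hw : ∀ t, IsW11 (b t) (w t)) {φ : Pt → ℝ}
    (hφ : ContDiff ℝ 1 φ) (ω : Pt) :
    ∫ x, fderiv ℝ φ x ω * piecewiseFun b w x =
      -(∑ h : τ × Fin 3,
          edgeConormal (b h.1) h.2 ω * edgeMean (b h.1) h.2 (fun x ↦ φ x * w h.1 x))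
        - ∑ t, ∫ x in openSimplex (b t), φ x * fderiv ℝ (w t) x ω := by
  have hmeas (t : τ) := (isOpen_openSimplex (b t)).measurableSet
  have hInt (t : τ) : IntegrableOn (fun x ↦ fderiv ℝ φ x ω * w t x) (openSimplex (b t)) :=
    IntegrableOn.continuousOn_mul_of_subset
      ((hφ.continuous_fderiv one_ne_zero).clm_apply continuous_const).continuousOn
      (hw t).integrableOn ((finite_range _).isCompact_convexHull ℝ) (hmeas t) interior_subset
  have hind (t : τ) (x : Pt) : fderiv ℝ φ x ω * (openSimplex (b t)).indicator (w t) x =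
      (openSimplex (b t)).indicator (fun x ↦ fderiv ℝ φ x ω * w t x) x := by
    by_cases hx : x ∈ openSimplex (b t) <;> simp [hx]
  simp only [piecewiseFun, Finset.sum_apply, Finset.mul_sum, hind]
  rw [integral_finsetSum _ fun t _ ↦ (hInt t).integrable_indicator (hmeas t)]
  simp only [integral_indicator (hmeas _), (hw _).integral_fderiv_mul hφ, Finset.sum_sub_distrib,
    Finset.sum_neg_distrib, Fintype.sum_prod_type]

theorem dominatesDeriv_piecewiseFun (hw : ∀ t, IsW11 (b t) (w t))
    (hdisj : Pairwise (Disjoint on fun t ↦ openSimplex (b t)))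
    (hbdry : ∀ h, (∀ h', ¬IsOpposite b h h') →
      Disjoint (segment ℝ (b h.1 (h.2 + 1)) (b h.1 (h.2 + 2))) U) (ω : Pt) :
    DominatesDeriv volume (piecewiseFun b w) U ω (meshMeasure b w ω) := by
  intro φ hφ _ hφU
  have hφm : Measurable φ := hφ.continuous.measurable
  rw [integral_fderiv_mul_piecewiseFun hw hφ, sum_edgeConormal_mul_edgeMean hw hdisj hbdry hφ hφU,
    ← neg_add', enorm_neg, meshMeasure, lintegral_add_measure, add_comm]
  simp only [lintegral_finsetSum_measure]
  refine (enorm_add_le _ _).trans (add_le_add ?_ ?_)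
  · refine (enorm_sum_le _ _).trans (Finset.sum_le_sum fun t _ ↦ ?_)
    exact enorm_integral_mul_le_lintegral_withDensity hφm
      ((hw t).integrableOn_fderiv_apply ω).aemeasurable
  · refine (enorm_sum_le _ _).trans (Finset.sum_le_sum fun ⟨h, h'⟩ hh ↦ ?_)
    rw [lintegral_smul_measure, enorm_mul, Real.enorm_eq_ofReal_abs, abs_mul,
      abs_of_pos (by norm_num : (0 : ℝ) < 2⁻¹), smul_eq_mul]
    gcongr
    exact enorm_integral_mul_le_lintegral_withDensity hφm
      (aestronglyMeasurable_segmentMeasure (continuousOn_jump hw hh)).aemeasurable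

theorem edgeMean_nonneg (b : AffineBasis (Fin 3) ℝ Pt) (i : Fin 3) {f : Pt → ℝ}
    (hf : ∀ x, 0 ≤ f x) : 0 ≤ edgeMean b i f :=
  intervalIntegral.integral_nonneg zero_le_one fun _ _ ↦ hf _

theorem meshMeasure_univ (hw : ∀ t, IsW11 (b t) (w t)) (ω : Pt) :
    meshMeasure b w ω univ = ENNReal.ofReal
      ((∑ t, ∫ x in openSimplex (b t), |fderiv ℝ (w t) x ω|) +
        ∑ p ∈ oppositePairs b, 2⁻¹ * |edgeConormal (b p.1.1) p.1.2 ω| *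
          edgeMean (b p.1.1) p.1.2 (fun x ↦ |w p.1.1 x - w p.2.1 x|)) := by
  have hjump (p : (τ × Fin 3) × (τ × Fin 3)) :
      0 ≤ edgeMean (b p.1.1) p.1.2 (fun x ↦ |w p.1.1 x - w p.2.1 x|) :=
    edgeMean_nonneg _ _ fun _ ↦ abs_nonneg _
  rw [ENNReal.ofReal_add (by positivity)
      (Finset.sum_nonneg fun p _ ↦ mul_nonneg (by positivity) (hjump p)),
    ENNReal.ofReal_sum_of_nonneg fun t _ ↦ by positivity,
    ENNReal.ofReal_sum_of_nonneg fun p _ ↦ mul_nonneg (by positivity) (hjump p), meshMeasure,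
    Measure.add_apply, Measure.finsetSum_apply, Measure.finsetSum_apply]
  congr 1
  · exact Finset.sum_congr rfl fun t _ ↦
      withDensity_enorm_univ ((hw t).integrableOn_fderiv_apply ω)
  · refine Finset.sum_congr rfl fun p hp ↦ ?_
    have hcont := continuousOn_jump hw hp
    rw [Measure.smul_apply, withDensity_enorm_univ (integrable_segmentMeasure hcont), smul_eq_mul,
      ← ENNReal.ofReal_mul (by positivity), integral_segmentMeasure hcont.abs, edgeMean]

theorem hasVariationBound_piecewiseFun (hw : ∀ t, IsW11 (b t) (w t))
    (hdisj : Pairwise (Disjoint on fun t ↦ openSimplex (b t)))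
    (hbdry : ∀ h, (∀ h', ¬IsOpposite b h h') →
      Disjoint (segment ℝ (b h.1 (h.2 + 1)) (b h.1 (h.2 + 2))) U) :
    HasVariationBound volume (piecewiseFun b w) U (meshVariation b w).toNNReal := by
  refine fun ω ↦ ⟨meshMeasure b w ω, dominatesDeriv_piecewiseFun hw hdisj hbdry ω, ?_⟩
  rw [meshMeasure_univ hw, ← ofReal_norm]
  change _ ≤ _ * ENNReal.ofReal (meshVariation b w)
  rw [← ENNReal.ofReal_mul (norm_nonneg ω), meshVariation, mul_add, Finset.mul_sum, Finset.mul_sum]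
  refine ENNReal.ofReal_le_ofReal (add_le_add (Finset.sum_le_sum fun t _ ↦ ?_)
    (Finset.sum_le_sum fun p _ ↦ ?_))
  · rw [← integral_const_mul]
    refine setIntegral_mono ((hw t).integrableOn_fderiv_apply ω).abs
      ((hw t).integrableOn_fderiv.norm.const_mul _) fun x ↦ ?_
    rw [mul_comm]
    exact (fderiv ℝ (w t) x).le_opNorm ω
  · rw [← mul_assoc, mul_left_comm, mul_comm ‖ω‖]
    gcongr
    · exact edgeMean_nonneg _ _ fun _ ↦ abs_nonneg _
    · exact abs_edgeConormal_le _ _ _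

end Mesh

section Energy

open scoped Function

theorem hasDerivAt_mul_abs (s : ℝ) : HasDerivAt (fun s ↦ s * |s|) (2 * |s|) s := by
  obtain rfl | hs := eq_or_ne s 0
  · have hbound : (fun s : ℝ ↦ s * |s|) =O[nhds 0] fun s ↦ ‖s - 0‖ ^ 2 :=
      .of_bound 1 (.of_forall fun s ↦ by simp [← sq])
    simpa [HasDerivAt, HasDerivAtFilter] using (hbound.hasFDerivAt one_lt_two).hasDerivAt
  · refine ((hasDerivAt_id s).mul (hasDerivAt_abs hs)).congr_deriv ?_
    rw [one_mul, id, self_mul_sign, two_mul]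

theorem deriv_mul_abs (s : ℝ) : deriv (fun s ↦ s * |s|) s = 2 * |s| := (hasDerivAt_mul_abs s).deriv

theorem contDiff_mul_abs : ContDiff ℝ 1 fun s : ℝ ↦ s * |s| := by
  refine contDiff_one_iff_deriv.2 ⟨fun s ↦ (hasDerivAt_mul_abs s).differentiableAt, ?_⟩
  rw [funext deriv_mul_abs]
  fun_prop

theorem abs_mul_abs_sub_mul_abs_le (a c : ℝ) : |a * (|a|) - c * (|c|)| ≤ |a - c| * (|a| + |c|) := by
  calc |a * (|a|) - c * (|c|)| = |a * (|a| - |c|) + (a - c) * (|c|)| := by ring_nf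
    _ ≤ |a| * |(|a| - |c|)| + |a - c| * |c| := by
        simpa only [abs_mul, abs_abs] using abs_add_le (a * (|a| - |c|)) ((a - c) * |c|)
    _ ≤ |a| * |a - c| + |a - c| * |c| := by
        gcongr ?_ + _
        gcongr |a| * ?_
        exact abs_abs_sub_abs_le a c
    _ = _ := by ring

theorem mul_abs_mul_abs_sub_mul_abs_le (a c : ℝ) {l : ℝ} (hl : 0 ≤ l) :
    l * |a * (|a|) - c * (|c|)| ≤ (a - c) ^ 2 + l ^ 2 * (a ^ 2 + c ^ 2) := by
  calc l * |a * (|a|) - c * (|c|)| ≤ l * (|a - c| * (|a| + |c|)) := by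
        gcongr; exact abs_mul_abs_sub_mul_abs_le a c
    _ = |a - c| * (l * (|a| + |c|)) := by ring
    _ ≤ |a - c| ^ 2 + l ^ 2 * (|a| ^ 2 + |c| ^ 2) := by
        nlinarith [two_mul_le_add_sq (2 * |a - c|) (l * (|a| + |c|)),
          mul_nonneg (sq_nonneg l) (sq_nonneg (|a| - |c|))]
    _ = _ := by simp only [sq_abs]

theorem sq_sub_le_two_mul_abs (a c : ℝ) : (a - c) ^ 2 ≤ 2 * |a * (|a|) - c * (|c|)| := by
  wlog h : c ≤ a generalizing a c
  · rw [← neg_sub c a, neg_sq, abs_sub_comm]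
    exact this c a (le_of_not_ge h)
  refine le_trans ?_ (mul_le_mul_of_nonneg_left (le_abs_self _) zero_le_two)
  obtain ha | ha := abs_cases a <;> obtain hc | hc := abs_cases c <;> rw [ha.1, hc.1] <;>
    nlinarith [sq_nonneg (a + c)]

section TriangleEnergy

variable {b : AffineBasis (Fin 3) ℝ Pt} {f : Pt → ℝ} {d κ : ℝ}

/-- The squared `H¹` norm of a function on a triangle. -/
def triangleEnergy (b : AffineBasis (Fin 3) ℝ Pt) (f : Pt → ℝ) : ℝ :=
  (∫ x in openSimplex b, f x ^ 2) + ∫ x in openSimplex b, ‖fderiv ℝ f x‖ ^ 2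

theorem IsW11.sq (hf : IsW11 b f) : IsW11 b fun x ↦ f x ^ 2 := hf.comp (contDiff_id.pow 2)

theorem IsW11.integral_norm_fderiv_comp_le {h : ℝ → ℝ} (hh : ContDiff ℝ 1 h)
    (hderiv : ∀ s, |deriv h s| ≤ 2 * |s|) (hf : IsW11 b f)
    (hDf : IntegrableOn (fun x ↦ ‖fderiv ℝ f x‖ ^ 2) (openSimplex b)) :
    ∫ x in openSimplex b, ‖fderiv ℝ (fun x ↦ h (f x)) x‖ ≤ triangleEnergy b f := by
  rw [triangleEnergy, ← integral_add hf.sq.integrableOn hDf]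
  refine setIntegral_mono_on (hf.comp hh).integrableOn_fderiv.norm
    (hf.sq.integrableOn.add hDf) (isOpen_openSimplex b).measurableSet fun x hx ↦ ?_
  have hchain : fderiv ℝ (fun x ↦ h (f x)) x = deriv h (f x) • fderiv ℝ f x :=
    ((hh.differentiable one_ne_zero _).hasDerivAt.comp_hasFDerivAt x
      (hf.differentiableAt hx).hasFDerivAt).fderiv
  calc ‖fderiv ℝ (fun x ↦ h (f x)) x‖ = |deriv h (f x)| * ‖fderiv ℝ f x‖ := by
        rw [hchain, norm_smul, Real.norm_eq_abs]
    _ ≤ 2 * |f x| * ‖fderiv ℝ f x‖ := by gcongr; exact hderiv _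
    _ ≤ f x ^ 2 + ‖fderiv ℝ f x‖ ^ 2 := by
        rw [← sq_abs (f x)]
        exact two_mul_le_add_sq _ _

theorem IsW11.edgeMean_sq_le (hf : IsW11 b f)
    (hDf : IntegrableOn (fun x ↦ ‖fderiv ℝ f x‖ ^ 2) (openSimplex b))
    (hd : ∀ i j, ‖b j - b i‖ ≤ d) (i : Fin 3) :
    |signedDoubleArea b| * edgeMean b i (fun x ↦ f x ^ 2) ≤ (3 + d) * triangleEnergy b f := by
  have hd0 : 0 ≤ d := (norm_nonneg _).trans (hd 0 0)
  have hL2 : ∫ x in openSimplex b, f x ^ 2 ≤ triangleEnergy b f :=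
    le_add_of_nonneg_right (by positivity)
  have hfderiv_sq := hf.integral_norm_fderiv_comp_le (contDiff_id.pow 2)
    (fun s ↦ by simp [abs_mul]) hDf
  calc |signedDoubleArea b| * edgeMean b i (fun x ↦ f x ^ 2)
      ≤ ∫ x in openSimplex b, (3 * |f x ^ 2| + d * ‖fderiv ℝ (fun x ↦ f x ^ 2) x‖) :=
        hf.sq.edgeMean_le (hd i)
    _ = 3 * (∫ x in openSimplex b, f x ^ 2)
          + d * ∫ x in openSimplex b, ‖fderiv ℝ (fun x ↦ f x ^ 2) x‖ := by
        rw [integral_add (hf.sq.integrableOn.abs.const_mul 3)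
          (hf.sq.integrableOn_fderiv.norm.const_mul d), integral_const_mul, integral_const_mul]
        simp only [abs_pow, sq_abs]
    _ ≤ 3 * triangleEnergy b f + d * triangleEnergy b f := by
        gcongr
        exact hfderiv_sq
    _ = (3 + d) * triangleEnergy b f := by ring

theorem IsW11.edgeLength_sq_mul_edgeMean_sq_le (hf : IsW11 b f)
    (hDf : IntegrableOn (fun x ↦ ‖fderiv ℝ f x‖ ^ 2) (openSimplex b))
    (hd : ∀ i j, ‖b j - b i‖ ≤ d) (hκ0 : 0 ≤ κ) {i : Fin 3}
    (hκ : edgeLength b i ^ 2 ≤ κ * |signedDoubleArea b|) :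
    edgeLength b i ^ 2 * edgeMean b i (fun x ↦ f x ^ 2) ≤ κ * (3 + d) * triangleEnergy b f := by
  have hsq : 0 ≤ edgeMean b i (fun x ↦ f x ^ 2) := edgeMean_nonneg _ _ fun _ ↦ sq_nonneg _
  calc edgeLength b i ^ 2 * edgeMean b i (fun x ↦ f x ^ 2)
      ≤ κ * |signedDoubleArea b| * edgeMean b i (fun x ↦ f x ^ 2) := by gcongr
    _ = κ * (|signedDoubleArea b| * edgeMean b i (fun x ↦ f x ^ 2)) := mul_assoc _ _ _
    _ ≤ κ * ((3 + d) * triangleEnergy b f) :=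
        mul_le_mul_of_nonneg_left (hf.edgeMean_sq_le hDf hd i) hκ0
    _ = κ * (3 + d) * triangleEnergy b f := (mul_assoc _ _ _).symm

end TriangleEnergy

variable {τ : Type*} [Fintype τ] {b : τ → AffineBasis (Fin 3) ℝ Pt} {u : τ → Pt → ℝ} {d κ : ℝ}

/-- The squared broken `H¹` norm of a piecewise function on a mesh; the factor `|e|⁻¹` turns the
integral of the squared jump over the edge `e` into its mean. -/
def meshEnergy (b : τ → AffineBasis (Fin 3) ℝ Pt) (u : τ → Pt → ℝ) : ℝ :=
  (∑ t, triangleEnergy (b t) (u t)) +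
    ∑ p ∈ oppositePairs b, 2⁻¹ * edgeMean (b p.1.1) p.1.2 (fun x ↦ (u p.1.1 x - u p.2.1 x) ^ 2)

theorem edgeMean_jump_mul_abs_le (hu : ∀ t, IsW11 (b t) (u t)) {p : (τ × Fin 3) × (τ × Fin 3)}
    (hp : p ∈ oppositePairs b) :
    edgeLength (b p.1.1) p.1.2 * edgeMean (b p.1.1) p.1.2
        (fun x ↦ |u p.1.1 x * (|u p.1.1 x|) - u p.2.1 x * (|u p.2.1 x|)|) ≤
      edgeMean (b p.1.1) p.1.2 (fun x ↦ (u p.1.1 x - u p.2.1 x) ^ 2) +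
        (edgeLength (b p.1.1) p.1.2 ^ 2 * edgeMean (b p.1.1) p.1.2 (fun x ↦ u p.1.1 x ^ 2) +
          edgeLength (b p.2.1) p.2.2 ^ 2 * edgeMean (b p.2.1) p.2.2 (fun x ↦ u p.2.1 x ^ 2)) := by
  have hp' : IsOpposite b p.1 p.2 := (Finset.mem_filter.1 hp).2
  have hjump : ContinuousOn (fun x ↦ (u p.1.1 x - u p.2.1 x) ^ 2)
      (segment ℝ (b p.1.1 (p.1.2 + 1)) (b p.1.1 (p.1.2 + 2))) := (continuousOn_jump hu hp).pow 2
  have hleft := (hu p.1.1).sq.continuousOn_segment (p.1.2 + 1) (p.1.2 + 2)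
  have hright := hp'.continuousOn_segment (hu p.2.1).sq
  have hW := continuousOn_jump (fun t ↦ (hu t).comp contDiff_mul_abs) hp
  have hsum : Integrable (fun x ↦ edgeLength (b p.1.1) p.1.2 ^ 2 * (u p.1.1 x ^ 2 + u p.2.1 x ^ 2))
      (segmentMeasure (b p.1.1 (p.1.2 + 1)) (b p.1.1 (p.1.2 + 2))) :=
    ((integrable_segmentMeasure hleft).add (integrable_segmentMeasure hright)).const_mul _
  rw [← edgeMean_congr hp'.2, ← edgeLength_congr hp'.2]
  simp only [edgeMean]
  rw [← integral_segmentMeasure hW.abs, ← integral_segmentMeasure hjump,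
    ← integral_segmentMeasure hleft, ← integral_segmentMeasure hright, ← mul_add,
    ← integral_add (integrable_segmentMeasure hleft) (integrable_segmentMeasure hright),
    ← integral_const_mul, ← integral_const_mul,
    ← integral_add (integrable_segmentMeasure hjump) hsum]
  exact integral_mono ((integrable_segmentMeasure hW.abs).const_mul _)
    ((integrable_segmentMeasure hjump).add hsum)
    fun x ↦ mul_abs_mul_abs_sub_mul_abs_le _ _ dist_nonneg

theorem sum_edgeMean_jump_mul_abs_le (hu : ∀ t, IsW11 (b t) (u t))
    (hdisj : Pairwise (Disjoint on fun t ↦ openSimplex (b t))) :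
    ∑ p ∈ oppositePairs b, 2⁻¹ * edgeLength (b p.1.1) p.1.2 * edgeMean (b p.1.1) p.1.2
        (fun x ↦ |u p.1.1 x * (|u p.1.1 x|) - u p.2.1 x * (|u p.2.1 x|)|) ≤
      (∑ p ∈ oppositePairs b, 2⁻¹ * edgeMean (b p.1.1) p.1.2
        (fun x ↦ (u p.1.1 x - u p.2.1 x) ^ 2)) +
      ∑ h : τ × Fin 3, edgeLength (b h.1) h.2 ^ 2 *
        edgeMean (b h.1) h.2 (fun x ↦ u h.1 x ^ 2) := by
  let g (h : τ × Fin 3) : ℝ :=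
    edgeLength (b h.1) h.2 ^ 2 * edgeMean (b h.1) h.2 (fun x ↦ u h.1 x ^ 2)
  have hg (h : τ × Fin 3) : 0 ≤ g h :=
    mul_nonneg (sq_nonneg _) (edgeMean_nonneg _ _ fun _ ↦ sq_nonneg _)
  refine le_trans ?_ (add_le_add_right (half_sum_pairs_le (fun _ _ ↦ IsOpposite.symm)
    (fun _ _ _ h h' ↦ h.unique hdisj h') hg) _)
  rw [Finset.mul_sum, ← oppositePairs, ← Finset.sum_add_distrib]
  refine Finset.sum_le_sum fun p hp ↦ ?_
  rw [mul_assoc, ← mul_add]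
  gcongr
  exact edgeMean_jump_mul_abs_le hu hp

theorem meshVariation_mul_abs_le (hu : ∀ t, IsW11 (b t) (u t))
    (hDu : ∀ t, IntegrableOn (fun x ↦ ‖fderiv ℝ (u t) x‖ ^ 2) (openSimplex (b t)))
    (hdisj : Pairwise (Disjoint on fun t ↦ openSimplex (b t))) (hd0 : 0 ≤ d) (hκ0 : 0 ≤ κ)
    (hd : ∀ t i j, ‖b t j - b t i‖ ≤ d)
    (hκ : ∀ t i, edgeLength (b t) i ^ 2 ≤ κ * |signedDoubleArea (b t)|) :
    meshVariation b (fun t x ↦ u t x * |u t x|) ≤ (1 + 3 * (κ * (3 + d))) * meshEnergy b u := by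
  have hgrad (t : τ) : ∫ x in openSimplex (b t), ‖fderiv ℝ (fun x ↦ u t x * |u t x|) x‖ ≤
      triangleEnergy (b t) (u t) :=
    (hu t).integral_norm_fderiv_comp_le contDiff_mul_abs
      (fun s ↦ by rw [deriv_mul_abs, abs_mul, abs_abs, abs_two]) (hDu t)
  have htrace : ∑ h : τ × Fin 3, edgeLength (b h.1) h.2 ^ 2 *
      edgeMean (b h.1) h.2 (fun x ↦ u h.1 x ^ 2) ≤
      3 * (κ * (3 + d)) * ∑ t, triangleEnergy (b t) (u t) := by
    calc _ ≤ ∑ h : τ × Fin 3, κ * (3 + d) * triangleEnergy (b h.1) (u h.1) :=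
          Finset.sum_le_sum fun h _ ↦
            (hu h.1).edgeLength_sq_mul_edgeMean_sq_le (hDu h.1) (hd h.1) hκ0 (hκ h.1 h.2)
      _ = _ := by
          simp only [Fintype.sum_prod_type, Finset.sum_const, Finset.card_univ, Fintype.card_fin,
            ← Finset.mul_sum, nsmul_eq_mul]
          push_cast
          ring
  have hjump : 0 ≤ ∑ p ∈ oppositePairs b, 2⁻¹ * edgeMean (b p.1.1) p.1.2
      (fun x ↦ (u p.1.1 x - u p.2.1 x) ^ 2) :=
    Finset.sum_nonneg fun p _ ↦ mul_nonneg (by norm_num) (edgeMean_nonneg _ _ fun _ ↦ sq_nonneg _)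
  have hconst : 0 ≤ 3 * (κ * (3 + d)) := by positivity
  calc meshVariation b (fun t x ↦ u t x * |u t x|)
      ≤ (∑ t, triangleEnergy (b t) (u t)) + _ :=
        add_le_add (Finset.sum_le_sum fun t _ ↦ hgrad t) (sum_edgeMean_jump_mul_abs_le hu hdisj)
    _ ≤ (1 + 3 * (κ * (3 + d))) * meshEnergy b u := by
        rw [meshEnergy]
        linarith [mul_nonneg hconst hjump]

end Energy

section SquareShift

open scoped NNReal ENNReal

theorem enorm_sq_sub_le_two_mul_enorm (a c : ℝ) :
    ‖(a - c) ^ 2‖ₑ ≤ 2 * ‖a * (|a|) - c * (|c|)‖ₑ := by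
  rw [Real.enorm_of_nonneg (sq_nonneg _), Real.enorm_eq_ofReal_abs,
    show (2 : ℝ≥0∞) = ENNReal.ofReal 2 by norm_num, ← ENNReal.ofReal_mul zero_le_two]
  exact ENNReal.ofReal_le_ofReal (sq_sub_le_two_mul_abs a c)

theorem exists_integral_shift_sub_sq_le {E ι σ : Type*} [NormedAddCommGroup E] [NormedSpace ℝ E]
    [FiniteDimensional ℝ E] [MeasurableSpace E] [BorelSpace E] (μ : Measure E)
    [μ.IsAddHaarMeasure] [Finite ι] [Finite σ] (b : σ → AffineBasis ι ℝ E) :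
    ∃ C : ℝ≥0, ∀ (v : E → ℝ) (V : ℝ≥0), Measurable v → Integrable (fun x ↦ v x ^ 2) μ →
      (∀ k, HasVariationBound μ (fun x ↦ v x * |v x|) (openSimplex (b k)) V) →
      (∀ᵐ x ∂μ, (∀ k, x ∉ openSimplex (b k)) → v x = 0) →
      ∀ ρ, ∫ x, (v (x + ρ) - v x) ^ 2 ∂μ ≤ C * ‖ρ‖ * ((∫ x, v x ^ 2 ∂μ) + V) := by
  obtain ⟨C, hC⟩ := exists_lintegral_shift_sub_le μ b
  refine ⟨2 * C, fun v V hv hv2 hV h0 ρ ↦ ?_⟩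
  have hw : Measurable fun x ↦ v x * |v x| := hv.mul hv.abs
  have hnorm (x : E) : ‖v x * |v x|‖ = ‖v x ^ 2‖ := by simp [sq]
  have hwint : Integrable (fun x ↦ v x * |v x|) μ :=
    hv2.congr' hw.aestronglyMeasurable (.of_forall fun x ↦ (hnorm x).symm)
  have hL1 : ∫⁻ x, ‖v x * |v x|‖ₑ ∂μ = ENNReal.ofReal (∫ x, v x ^ 2 ∂μ) := by
    rw [ofReal_integral_eq_lintegral_ofReal hv2 (.of_forall fun x ↦ sq_nonneg _)]
    exact lintegral_congr fun x ↦ by rw [← ofReal_norm, hnorm, norm_pow, Real.norm_eq_abs, sq_abs]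
  have hbound : ∫⁻ x, ‖(v (x + ρ) - v x) ^ 2‖ₑ ∂μ
      ≤ ENNReal.ofReal (↑(2 * C) * ‖ρ‖ * ((∫ x, v x ^ 2 ∂μ) + V)) := by
    calc ∫⁻ x, ‖(v (x + ρ) - v x) ^ 2‖ₑ ∂μ
        ≤ ∫⁻ x, 2 * ‖v (x + ρ) * |v (x + ρ)| - v x * |v x|‖ₑ ∂μ :=
          lintegral_mono fun x ↦ enorm_sq_sub_le_two_mul_enorm _ _
      _ = 2 * ∫⁻ x, ‖v (x + ρ) * |v (x + ρ)| - v x * |v x|‖ₑ ∂μ :=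
          lintegral_const_mul' _ _ ENNReal.ofNat_ne_top
      _ ≤ 2 * (C * ‖ρ‖ₑ * ((∫⁻ x, ‖v x * |v x|‖ₑ ∂μ) + V)) := by
          gcongr
          exact hC _ V hw hwint.locallyIntegrable hV
            (h0.mono fun x hx hxb ↦ by rw [hx hxb, zero_mul]) ρ
      _ = _ := by
          rw [hL1, ← ofReal_norm, ENNReal.ofReal_mul (by positivity),
            ENNReal.ofReal_mul (by positivity), ENNReal.ofReal_add (by positivity) V.coe_nonneg,
            ENNReal.ofReal_coe_nnreal, ENNReal.ofReal_coe_nnreal]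
          push_cast
          ring
  calc ∫ x, (v (x + ρ) - v x) ^ 2 ∂μ ≤ ‖∫ x, (v (x + ρ) - v x) ^ 2 ∂μ‖ := Real.le_norm_self _
    _ = ‖∫ x, (v (x + ρ) - v x) ^ 2 ∂μ‖ₑ.toReal := (toReal_enorm _).symm
    _ ≤ _ := ENNReal.toReal_le_of_le_ofReal (by positivity)
      ((enorm_integral_le_lintegral_enorm _).trans hbound)

end SquareShift

section PiecewiseFun

open scoped Function

variable {τ : Type*} [Fintype τ] {b : τ → AffineBasis (Fin 3) ℝ Pt} {u : τ → Pt → ℝ}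

theorem piecewiseFun_of_mem (hdisj : Pairwise (Disjoint on fun t ↦ openSimplex (b t))) {t : τ}
    {x : Pt} (hx : x ∈ openSimplex (b t)) : piecewiseFun b u x = u t x := by
  rw [piecewiseFun, Finset.sum_apply, Fintype.sum_eq_single t fun t' ht' ↦
    indicator_of_notMem ((hdisj ht').notMem_of_mem_right hx) _, indicator_of_mem hx]

theorem piecewiseFun_of_forall_notMem {x : Pt} (hx : ∀ t, x ∉ openSimplex (b t)) :
    piecewiseFun b u x = 0 := by
  rw [piecewiseFun, Finset.sum_apply]
  exact Finset.sum_eq_zero fun t _ ↦ indicator_of_notMem (hx t) _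

theorem piecewiseFun_comp (hdisj : Pairwise (Disjoint on fun t ↦ openSimplex (b t))) {h : ℝ → ℝ}
    (h0 : h 0 = 0) : piecewiseFun b (fun t x ↦ h (u t x)) = fun x ↦ h (piecewiseFun b u x) := by
  ext x
  by_cases hx : ∃ t, x ∈ openSimplex (b t)
  · obtain ⟨t, ht⟩ := hx
    rw [piecewiseFun_of_mem hdisj ht, piecewiseFun_of_mem hdisj ht]
  · push Not at hx
    rw [piecewiseFun_of_forall_notMem hx, piecewiseFun_of_forall_notMem hx, h0]

theorem measurable_piecewiseFun (hu : ∀ t, IsW11 (b t) (u t)) : Measurable (piecewiseFun b u) := by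
  rw [piecewiseFun, Finset.sum_fn]
  refine Finset.measurable_sum _ fun t _ ↦ ?_
  rw [← piecewise_eq_indicator]
  exact ((hu t).continuousOn.mono interior_subset).measurable_piecewise continuousOn_const
    (isOpen_openSimplex _).measurableSet

theorem integrable_piecewiseFun (hu : ∀ t, IntegrableOn (u t) (openSimplex (b t))) :
    Integrable (piecewiseFun b u) :=
  integrable_finsetSum' _ fun t _ ↦ (hu t).integrable_indicator (isOpen_openSimplex _).measurableSet

theorem integral_piecewiseFun (hu : ∀ t, IntegrableOn (u t) (openSimplex (b t))) :
    ∫ x, piecewiseFun b u x = ∑ t, ∫ x in openSimplex (b t), u t x := by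
  have hmeas (t : τ) : MeasurableSet (openSimplex (b t)) := (isOpen_openSimplex _).measurableSet
  simp only [piecewiseFun, Finset.sum_apply]
  rw [integral_finsetSum _ fun t _ ↦ (hu t).integrable_indicator (hmeas t)]
  exact Finset.sum_congr rfl fun t _ ↦ integral_indicator (hmeas t)

end PiecewiseFun

section TriangleBasis

theorem affineIndependent_of_planeCross_ne_zero {p : Fin 3 → Pt}
    (h : planeCross (p 1 - p 0) (p 2 - p 0) ≠ 0) : AffineIndependent ℝ p := by
  rw [affineIndependent_iff_of_fintype]
  intro w hw hsum
  rw [Finset.weightedVSub_eq_weightedVSubOfPoint_of_sum_eq_zero _ _ _ hw (p 0),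
    Finset.weightedVSubOfPoint_apply] at hsum
  have h0 := congrArg (fun y : Pt ↦ y 0) hsum
  have h1 := congrArg (fun y : Pt ↦ y 1) hsum
  simp only [Fin.sum_univ_three, vsub_eq_sub, sub_self, smul_zero, zero_add, PiLp.add_apply,
    PiLp.smul_apply, smul_eq_mul, PiLp.zero_apply] at h0 h1 hw
  have hw1 : w 1 = 0 := (mul_eq_zero_iff_right h).1 (by
    rw [planeCross]
    linear_combination (p 2 - p 0) 1 * h0 - (p 2 - p 0) 0 * h1)
  have hw2 : w 2 = 0 := (mul_eq_zero_iff_right h).1 (by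
    rw [planeCross]
    linear_combination (p 1 - p 0) 0 * h1 - (p 1 - p 0) 1 * h0)
  have hw0 : w 0 = 0 := by linarith
  intro i
  fin_cases i <;> assumption

variable {t t₁ t₂ : Tri} {K : ℝ}

/-- The vertices of a nondegenerate triangle as an affine basis of the plane. -/
def Tri.basis (t : Tri) (h : t.Nondeg) : AffineBasis (Fin 3) ℝ Pt :=
  have hind : AffineIndependent ℝ ![t.A, t.B, t.C] := affineIndependent_of_planeCross_ne_zero h
  ⟨![t.A, t.B, t.C], hind, hind.affineSpan_eq_top_iff_card_eq_finrank_add_one.2 (by simp)⟩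

theorem Tri.coe_basis (h : t.Nondeg) : ⇑(t.basis h) = ![t.A, t.B, t.C] := rfl

theorem Tri.convexHull_range_basis (h : t.Nondeg) :
    convexHull ℝ (range (t.basis h)) = t.closedHull := by
  rw [t.coe_basis, closedHull, Matrix.range_cons, Matrix.range_cons_cons_empty]
  rfl

theorem Tri.openSimplex_basis (h : t.Nondeg) : openSimplex (t.basis h) = t.openHull := by
  rw [openSimplex, t.convexHull_range_basis, openHull]

theorem Tri.signedDoubleArea_basis (h : t.Nondeg) : signedDoubleArea (t.basis h) = t.cross := rfl

theorem edgeLength_sq_mul_abs_signedDoubleArea_le (b : AffineBasis (Fin 3) ℝ Pt) (i : Fin 3) :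
    edgeLength b i ^ 2 * |signedDoubleArea b| ≤ (∏ j, edgeLength b j) * ∑ j, edgeLength b j := by
  have hnonneg (j : Fin 3) : 0 ≤ edgeLength b j := dist_nonneg
  have harea : |signedDoubleArea b| ≤ edgeLength b (i + 1) * edgeLength b (i + 2) := by
    rw [← planeCross_edges_eq b i]
    refine (abs_planeCross_le _ _).trans_eq ?_
    rw [edgeLength, edgeLength, show i + 1 + 1 = i + 2 by omega, show i + 1 + 2 = i by omega,
      show i + 2 + 1 = i by omega, show i + 2 + 2 = i + 1 by omega, ← dist_eq_norm, ← dist_eq_norm,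
      dist_comm (b (i + 1)), mul_comm]
  have hprod :
      ∏ j, edgeLength b j = edgeLength b i * (edgeLength b (i + 1) * edgeLength b (i + 2)) := by
    fin_cases i <;>
      simp only [Fin.prod_univ_three, Fin.zero_eta, Fin.mk_one, Fin.reduceFinMk, Fin.reduceAdd,
        zero_add] <;>
      ring
  calc edgeLength b i ^ 2 * |signedDoubleArea b|
      ≤ edgeLength b i ^ 2 * (edgeLength b (i + 1) * edgeLength b (i + 2)) := by gcongr
    _ = (∏ j, edgeLength b j) * edgeLength b i := by rw [hprod]; ring
    _ ≤ (∏ j, edgeLength b j) * ∑ j, edgeLength b j :=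
        mul_le_mul_of_nonneg_left (Finset.single_le_sum (fun j _ ↦ hnonneg j) (Finset.mem_univ i))
          (Finset.prod_nonneg fun j _ ↦ hnonneg j)

theorem Tri.prod_edgeLength_mul_sum_edgeLength (h : t.Nondeg) :
    (∏ j, edgeLength (t.basis h) j) * ∑ j, edgeLength (t.basis h) j
      = 2 * t.shapeReg * |signedDoubleArea (t.basis h)| ^ 2 := by
  have hcross : |t.cross| ≠ 0 := abs_ne_zero.2 h
  have hla : edgeLength (t.basis h) 0 = t.la := rfl
  have hlb : edgeLength (t.basis h) 1 = t.lb := dist_comm _ _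
  have hlc : edgeLength (t.basis h) 2 = t.lc := rfl
  rw [Fin.prod_univ_three, Fin.sum_univ_three, hla, hlb, hlc, t.signedDoubleArea_basis, shapeReg,
    circumradius, inradius, area]
  field_simp
  ring

theorem Tri.edgeLength_sq_le (h : t.Nondeg) (hK : t.shapeReg ≤ K) (i : Fin 3) :
    edgeLength (t.basis h) i ^ 2 ≤ 2 * |K| * |signedDoubleArea (t.basis h)| := by
  have hpos : 0 < |signedDoubleArea (t.basis h)| := abs_pos.2 (signedDoubleArea_ne_zero _)
  refine le_of_mul_le_mul_right ?_ hpos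
  calc edgeLength (t.basis h) i ^ 2 * |signedDoubleArea (t.basis h)|
      ≤ 2 * t.shapeReg * |signedDoubleArea (t.basis h)| ^ 2 :=
        (edgeLength_sq_mul_abs_signedDoubleArea_le _ i).trans_eq
          (t.prod_edgeLength_mul_sum_edgeLength h)
    _ ≤ 2 * |K| * |signedDoubleArea (t.basis h)| ^ 2 := by
        gcongr
        exact hK.trans (le_abs_self K)
    _ = _ := by ring

theorem Tri.sum_map_edgeList (h : t.Nondeg) (g : Pt × Pt → ℝ) :
    (t.edgeList.map g).sum = ∑ i, g (t.basis h (i + 1), t.basis h (i + 2)) := by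
  simp [edgeList, coe_basis, Fin.sum_univ_three, add_comm]

theorem Tri.exists_mem_edgeList_iff (h : t.Nondeg) {P : Pt × Pt → Prop} :
    (∃ e ∈ t.edgeList, P e) ↔ ∃ i, P (t.basis h (i + 1), t.basis h (i + 2)) := by
  simp only [edgeList, List.mem_cons, List.not_mem_nil, or_false, exists_eq_or_imp, exists_eq_left,
    coe_basis, Fin.exists_fin_succ, IsEmpty.exists_iff]
  exact or_rotate

theorem Tri.mem_edgeList (h : t.Nondeg) (i : Fin 3) :
    (t.basis h (i + 1), t.basis h (i + 2)) ∈ t.edgeList := by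
  fin_cases i <;> simp [edgeList, coe_basis]

theorem sameEdge_iff {e e' : Pt × Pt} : SameEdge e e' ↔ s(e.1, e.2) = s(e'.1, e'.2) := by
  rw [SameEdge, Sym2.eq_iff, Prod.ext_iff, Prod.ext_iff]
  grind

theorem Tri.exists_sameEdge_iff (h₁ : t₁.Nondeg) (h₂ : t₂.Nondeg) (i : Fin 3) :
    (∃ e' ∈ t₂.edgeList, SameEdge (t₁.basis h₁ (i + 1), t₁.basis h₁ (i + 2)) e') ↔
      ∃ j, oppositeEdge (t₁.basis h₁) i = oppositeEdge (t₂.basis h₂) j := by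
  simp only [t₂.exists_mem_edgeList_iff h₂, sameEdge_iff, oppositeEdge]

theorem inv_dist_mul_segInt {p q : Pt} (h : p ≠ q) (f : Pt → ℝ) :
    (dist p q)⁻¹ * segInt p q f = segmentMean p q f :=
  inv_mul_cancel_left₀ (dist_ne_zero.2 h) _

theorem edgeJump_eq (h₁ : t₁.Nondeg) (h₂ : t₂.Nondeg) (u : Tri → Pt → ℝ) :
    Triangulation.edgeJump u t₁ t₂ = ∑ i, ∑ j,
      if oppositeEdge (t₁.basis h₁) i = oppositeEdge (t₂.basis h₂) j then
        edgeMean (t₁.basis h₁) i (fun x ↦ (u t₁ x - u t₂ x) ^ 2) else 0 := by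
  rw [Triangulation.edgeJump, t₁.sum_map_edgeList h₁]
  refine Finset.sum_congr rfl fun i _ ↦ ?_
  simp only [t₁.exists_sameEdge_iff h₁ h₂ i]
  split_ifs with hi
  · obtain ⟨j, hj⟩ := hi
    have hne : t₁.basis h₁ (i + 1) ≠ t₁.basis h₁ (i + 2) :=
      (t₁.basis h₁).ind.injective.ne (by omega)
    rw [Fintype.sum_eq_single j fun j' hj' ↦ if_neg fun hij' ↦
      hj' (oppositeEdge_injective _ (hij'.symm.trans hj)), if_pos hj, inv_dist_mul_segInt hne,
      edgeMean]
  · push Not at hi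
    exact (Finset.sum_eq_zero fun j _ ↦ if_neg (hi j)).symm

theorem Tri.openHull_subset {Ω : Set Pt} {S : Finset Tri}
    (hΩ : Ω = interior (⋃ t ∈ S, t.closedHull)) (ht : t ∈ S) : t.openHull ⊆ Ω :=
  (interior_mono (subset_biUnion_of_mem (u := Tri.closedHull) ht)).trans_eq hΩ.symm

theorem Tri.ae_mem_openHull_of_mem_closedHull (t : Tri) :
    ∀ᵐ x, x ∈ t.closedHull → x ∈ t.openHull := by
  filter_upwards [measure_eq_zero_iff_ae_notMem.1
    ((convex_convexHull ℝ {t.A, t.B, t.C}).addHaar_frontier volume)] with x hx hxt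
  by_contra hInt
  exact hx ⟨subset_closure hxt, hInt⟩

theorem ae_exists_mem_openHull {Ω : Set Pt} {S : Finset Tri}
    (hΩ : Ω = interior (⋃ t ∈ S, t.closedHull)) : ∀ᵐ x, x ∈ Ω → ∃ t ∈ S, x ∈ t.openHull := by
  filter_upwards [ae_all_iff.2 fun t : {t // t ∈ S} ↦ t.1.ae_mem_openHull_of_mem_closedHull]
    with x hx hxΩ
  rw [hΩ] at hxΩ
  obtain ⟨t, ht, hxt⟩ := mem_iUnion₂.1 (interior_subset hxΩ)
  exact ⟨t, ht, hx ⟨t, ht⟩ hxt⟩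

end TriangleBasis

section ShiftContinuity

open scoped NNReal Function

namespace Triangulation

variable {Ω : Set Pt} {T : Triangulation Ω} {u : Tri → Pt → ℝ} {v : Pt → ℝ} {K : ℝ}

/-- The triangles of a triangulation as a mesh of affine bases. -/
def basis (T : Triangulation Ω) (t : {t // t ∈ T.tris}) : AffineBasis (Fin 3) ℝ Pt :=
  t.1.basis (T.nondeg t t.2)

theorem openSimplex_basis (T : Triangulation Ω) (t : {t // t ∈ T.tris}) :
    openSimplex (T.basis t) = t.1.openHull := t.1.openSimplex_basis _

theorem pairwise_disjoint_openSimplex (T : Triangulation Ω) :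
    Pairwise (Disjoint on fun t ↦ openSimplex (T.basis t)) := fun t t' h ↦ by
  rw [Function.onFun, openSimplex_basis, openSimplex_basis, disjoint_iff_inter_eq_empty]
  exact T.disj t t.2 t' t'.2 (Subtype.coe_ne_coe.2 h)

theorem jumpSq_eq (T : Triangulation Ω) (u : Tri → Pt → ℝ) :
    T.jumpSq u = ∑ p ∈ oppositePairs T.basis, 2⁻¹ *
      edgeMean (T.basis p.1.1) p.1.2 (fun x ↦ (u p.1.1 x - u p.2.1 x) ^ 2) := by
  rw [jumpSq, ← Finset.mul_sum, one_div, oppositePairs, Finset.sum_filter, Fintype.sum_prod_type,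
    Fintype.sum_prod_type]
  simp only [Fintype.sum_prod_type, IsOpposite]
  rw [← Finset.sum_coe_sort]
  congr 1
  refine Finset.sum_congr rfl fun t₁ _ ↦ ?_
  rw [Finset.sum_comm, ← Finset.sum_coe_sort]
  refine Finset.sum_congr rfl fun t₂ _ ↦ ?_
  obtain rfl | h := eq_or_ne t₁ t₂
  · simp
  · simp only [ne_eq, h, Subtype.coe_ne_coe.2 h, not_false_iff, if_true, true_and]
    exact edgeJump_eq _ _ u

theorem normSq_eq_meshEnergy (T : Triangulation Ω) (u : Tri → Pt → ℝ) :
    T.normSq u = meshEnergy T.basis (fun t ↦ u t) := by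
  rw [normSq, jumpSq_eq, sqL2, gradSq, ← Finset.sum_coe_sort, ← Finset.sum_coe_sort T.tris fun t ↦
    ∫ x in t.openHull, ‖fderiv ℝ (u t) x‖ ^ 2, ← Finset.sum_add_distrib, meshEnergy]
  simp only [triangleEnergy, openSimplex_basis]

theorem PwH1.isW11 (hu : T.PwH1 u) (t : {t // t ∈ T.tris}) : IsW11 (T.basis t) (u t) := by
  obtain ⟨hcont, hdiff, -, hgrad⟩ := hu t t.2
  have hhull : convexHull ℝ (range (T.basis t)) = t.1.closedHull := t.1.convexHull_range_basis _
  rw [← openSimplex_basis] at hdiff hgrad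
  have hfinite : volume (openSimplex (T.basis t)) ≠ ⊤ :=
    (((finite_range _).isCompact_convexHull ℝ).isBounded.subset
      interior_subset).measure_lt_top.ne
  refine ⟨hhull ▸ hcont, hdiff, ((integrableOn_const hfinite (C := (1 : ℝ))).add hgrad).mono'
    (measurable_fderiv ℝ _).aestronglyMeasurable (.of_forall fun x ↦ ?_)⟩
  change _ ≤ 1 + ‖fderiv ℝ (u t) x‖ ^ 2
  nlinarith [sq_nonneg (‖fderiv ℝ (u t) x‖ - 1)]

theorem isOpen (T : Triangulation Ω) : IsOpen Ω := T.cover ▸ isOpen_interior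

theorem disjoint_segment_of_forall_not_isOpposite (T : Triangulation Ω)
    (h : {t // t ∈ T.tris} × Fin 3) (hh : ∀ h', ¬IsOpposite T.basis h h') :
    Disjoint (segment ℝ (T.basis h.1 (h.2 + 1)) (T.basis h.1 (h.2 + 2))) Ω := by
  obtain ⟨t, i⟩ := h
  have ht := T.nondeg t t.2
  obtain hfr | ⟨t', ht', hne, hedge⟩ := T.conforming t t.2 _ (t.1.mem_edgeList ht i)
  · exact (disjoint_frontier_iff_isOpen.2 T.isOpen).mono_left hfr
  · obtain ⟨j, hj⟩ := (t.1.exists_sameEdge_iff ht (T.nondeg t' ht') i).1 hedge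
    exact absurd ⟨fun h ↦ hne (congrArg Subtype.val h).symm, hj⟩ (hh (⟨t', ht'⟩, j))

theorem norm_basis_sub_le (T : Triangulation Ω) (hΩ : Bornology.IsBounded Ω)
    (t : {t // t ∈ T.tris}) (i j : Fin 3) : ‖T.basis t j - T.basis t i‖ ≤ Metric.diam Ω := by
  have hmem (k : Fin 3) : T.basis t k ∈ closure Ω := by
    refine closure_mono (t.1.openHull_subset T.cover t.2) ?_
    rw [← openSimplex_basis, openSimplex,
      (convex_convexHull ℝ _).closure_interior_eq_closure_of_nonempty_interior
        ⟨_, (T.basis t).centroid_mem_interior_convexHull⟩]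
    exact subset_closure (subset_convexHull ℝ _ (mem_range_self k))
  rw [← dist_eq_norm, ← Metric.diam_closure]
  exact Metric.dist_le_diam_of_mem hΩ.closure (hmem j) (hmem i)

theorem sqL2_le_normSq (T : Triangulation Ω) (u : Tri → Pt → ℝ) : T.sqL2 u ≤ T.normSq u := by
  have hgrad : 0 ≤ T.gradSq u := Finset.sum_nonneg fun t _ ↦ by positivity
  have hjump : 0 ≤ T.jumpSq u := by
    rw [jumpSq_eq]
    exact Finset.sum_nonneg fun p _ ↦
      mul_nonneg (by norm_num) (edgeMean_nonneg _ _ fun _ ↦ sq_nonneg _)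
  rw [normSq, add_assoc]
  exact le_add_of_nonneg_right (add_nonneg hgrad hjump)

theorem exists_hasVariationBound (hΩ : Bornology.IsBounded Ω) (K : ℝ) :
    ∃ M : ℝ, 0 ≤ M ∧ ∀ T : Triangulation Ω, T.ShapeRegular K → ∀ u, T.PwH1 u →
      HasVariationBound volume (fun x ↦ piecewiseFun T.basis (fun t ↦ u t) x *
        |piecewiseFun T.basis (fun t ↦ u t) x|) Ω (M * T.normSq u).toNNReal := by
  refine ⟨1 + 3 * (2 * |K| * (3 + Metric.diam Ω)), by positivity, fun T hT u hu ↦ ?_⟩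
  rw [normSq_eq_meshEnergy, ← piecewiseFun_comp T.pairwise_disjoint_openSimplex
    (h := fun s ↦ s * |s|) (by simp)]
  refine (hasVariationBound_piecewiseFun (fun t ↦ (hu.isW11 t).comp contDiff_mul_abs)
    T.pairwise_disjoint_openSimplex T.disjoint_segment_of_forall_not_isOpposite).mono subset_rfl
    (Real.toNNReal_le_toNNReal (meshVariation_mul_abs_le hu.isW11 (fun t ↦ ?_)
      T.pairwise_disjoint_openSimplex Metric.diam_nonneg (by positivity) (T.norm_basis_sub_le hΩ)
      fun t ↦ t.1.edgeLength_sq_le (T.nondeg t t.2) (hT t t.2)))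
  rw [openSimplex_basis]
  exact (hu t t.2).2.2.2

theorem PwH1.integrable_sq (hu : T.PwH1 u) :
    Integrable fun x ↦ piecewiseFun T.basis (fun t ↦ u t) x ^ 2 := by
  rw [← piecewiseFun_comp T.pairwise_disjoint_openSimplex (h := (· ^ 2)) (by simp)]
  exact integrable_piecewiseFun fun t ↦ (hu.isW11 t).sq.integrableOn

theorem PwH1.integral_sq (hu : T.PwH1 u) :
    ∫ x, piecewiseFun T.basis (fun t ↦ u t) x ^ 2 = T.sqL2 u := by
  rw [← piecewiseFun_comp T.pairwise_disjoint_openSimplex (h := (· ^ 2)) (by simp),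
    integral_piecewiseFun fun t ↦ (hu.isW11 t).sq.integrableOn, sqL2,
    ← Finset.sum_coe_sort T.tris fun t ↦ ∫ x in t.openHull, u t x ^ 2]
  simp only [openSimplex_basis]

theorem piecewiseFun_of_notMem {x : Pt} (hx : x ∉ Ω) :
    piecewiseFun T.basis (fun t ↦ u t) x = 0 :=
  piecewiseFun_of_forall_notMem fun t ht ↦
    hx (t.1.openHull_subset T.cover t.2 (T.openSimplex_basis t ▸ ht))

theorem Glues.ae_eq (hv : T.Glues u v) : v =ᵐ[volume] piecewiseFun T.basis (fun t ↦ u t) := by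
  filter_upwards [ae_exists_mem_openHull T.cover] with x hx
  by_cases hxΩ : x ∈ Ω
  · obtain ⟨t, ht, hxt⟩ := hx hxΩ
    rw [hv.1 t ht x hxt, piecewiseFun_of_mem T.pairwise_disjoint_openSimplex (t := ⟨t, ht⟩)
      (T.openSimplex_basis ⟨t, ht⟩ ▸ hxt)]
  · rw [hv.2 x hxΩ, piecewiseFun_of_notMem hxΩ]

end Triangulation

theorem integral_shift_sub_sq_congr {v w : Pt → ℝ} (h : v =ᵐ[volume] w) (ρ : Pt) :
    ∫ x, (v (x + ρ) - v x) ^ 2 = ∫ x, (w (x + ρ) - w x) ^ 2 := by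
  have hshift := (measurePreserving_add_right volume ρ).quasiMeasurePreserving.ae_eq_comp h
  refine integral_congr_ae ?_
  filter_upwards [h, hshift] with x hx hxρ
  simp only [Function.comp_apply] at hxρ
  rw [hx, hxρ]

theorem IsPolygon.exists_integral_shift_sub_sq_le {Ω : Set Pt} (hΩ : IsPolygon Ω) :
    ∃ C : ℝ≥0, ∀ (v : Pt → ℝ) (V : ℝ≥0), Measurable v → Integrable (fun x ↦ v x ^ 2) →
      HasVariationBound volume (fun x ↦ v x * |v x|) Ω V → (∀ x ∉ Ω, v x = 0) →
      ∀ ρ, ∫ x, (v (x + ρ) - v x) ^ 2 ≤ C * ‖ρ‖ * ((∫ x, v x ^ 2) + V) := by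
  obtain ⟨-, -, S, hS, hΩS⟩ := hΩ
  obtain ⟨C, hC⟩ := _root_.exists_integral_shift_sub_sq_le volume
    fun t : {t // t ∈ S} ↦ t.1.basis (hS t t.2)
  refine ⟨C, fun v V hv hv2 hV h0 ↦ hC v V hv hv2 (fun t ↦ hV.mono ?_ le_rfl) ?_⟩
  · exact (t.1.openSimplex_basis _).trans_subset (t.1.openHull_subset hΩS t.2)
  · filter_upwards [ae_exists_mem_openHull hΩS] with x hx hxS
    refine h0 x fun hxΩ ↦ ?_
    obtain ⟨t, ht, hxt⟩ := hx hxΩ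
    exact hxS ⟨t, ht⟩ (t.openSimplex_basis _ ▸ hxt)

end ShiftContinuity

/-- Shift continuity of piecewise `H¹` functions: if `v` is the extension of `u ∈ H¹_h`
by zero to the plane, then `∫_{ℝ²} (v(x+ρ) − v(x))² dx ≤ C |ρ| ‖u‖²_{H¹_h}`, with `C`
depending only on `Ω` and `𝒦`. -/
theorem shift_continuity (Ω : Set Pt) (hΩ : IsPolygon Ω) (K : ℝ) :
    ∃ C : ℝ, 0 < C ∧ ∀ T : Triangulation Ω, T.ShapeRegular K →
      ∀ (u : Tri → Pt → ℝ) (v : Pt → ℝ), T.PwH1 u → T.Glues u v →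
        ∀ ρ : Pt, (∫ x, (v (x + ρ) - v x) ^ 2) ≤ C * ‖ρ‖ * T.normSq u := by
  obtain ⟨M, hM0, hM⟩ := Triangulation.exists_hasVariationBound hΩ.2.1 K
  obtain ⟨C, hC⟩ := hΩ.exists_integral_shift_sub_sq_le
  refine ⟨C * (1 + M) + 1, by positivity, fun T hT u v hu hv ρ ↦ ?_⟩
  have hN : 0 ≤ T.normSq u :=
    (Finset.sum_nonneg fun t _ ↦ by positivity).trans (T.sqL2_le_normSq u)
  have hshift := hC _ _ (measurable_piecewiseFun hu.isW11) hu.integrable_sq (hM T hT u hu)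
    (fun x ↦ Triangulation.piecewiseFun_of_notMem) ρ
  rw [← integral_shift_sub_sq_congr hv.ae_eq ρ, hu.integral_sq,
    Real.coe_toNNReal _ (mul_nonneg hM0 hN)] at hshift
  calc ∫ x, (v (x + ρ) - v x) ^ 2 ≤ C * ‖ρ‖ * (T.sqL2 u + M * T.normSq u) := hshift
    _ ≤ C * ‖ρ‖ * (T.normSq u + M * T.normSq u) := by
        gcongr
        exact T.sqL2_le_normSq u
    _ ≤ (C * (1 + M) + 1) * ‖ρ‖ * T.normSq u := by
        linarith [mul_nonneg (norm_nonneg ρ) hN]
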